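/- arXiv:2010.02070 — 2 statements merged into one kernel-verified Lean document; each statement's English description precedes it below -/
import Mathlib

section
/- Let n = 5 or n ≥ 7, let L ≅ Sym(n) be the permutation group induced by the action of Sym(n) on the set of ordered pairs of distinct elements of {1,…,n}, and let (Γ,G) be a locally L pair. Then for every vertex x of Γ, the pointwise stabiliser G_x^{[2]} of the ball of radius 2 around x is trivial. -/
open MulAction Pointwise

/-- The set of ordered pairs of distinct elements of `{1,…,n}`. -/
abbrev OPairs (n : ℕ) : Type := {p : Fin n × Fin n // p.1 ≠ p.2}

/-- `Sym(n)` acts on the ordered pairs of distinct elements. -/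
instance opairsAction (n : ℕ) : MulAction (Equiv.Perm (Fin n)) (OPairs n) where
  smul σ p := ⟨(σ p.1.1, σ p.1.2), fun h => p.2 (σ.injective h)⟩
  one_smul p := rfl
  mul_smul σ τ p := rfl

/-- Every element of `G` is an automorphism of `Γ`. -/
def PreservesAdj {V : Type*} (Γ : SimpleGraph V) (G : Subgroup (Equiv.Perm V)) : Prop :=
  ∀ g ∈ G, ∀ u v : V, Γ.Adj u v ↔ Γ.Adj (g u) (g v)

/-- The pointwise stabiliser in `G` of the ball of radius `i` around `x`. -/
def ballStab {V : Type*} (Γ : SimpleGraph V) (G : Subgroup (Equiv.Perm V)) (x : V) (i : ℕ) :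
    Subgroup G :=
  ⨅ (v : V) (_ : Γ.dist x v ≤ i), MulAction.stabilizer G v

/-- `(Γ, G)` is a locally `L` pair, for `L` the permutation group induced by `Sym(n)` on
ordered pairs of distinct elements of `{1,…,n}`. -/
def IsLocallyOPairs (n : ℕ) {V : Type*} (Γ : SimpleGraph V) (G : Subgroup (Equiv.Perm V)) :
    Prop :=
  PreservesAdj Γ G ∧ MulAction.IsPretransitive G V ∧
  ∀ x : V, ∃ (e : Γ.neighborSet x ≃ OPairs n)
      (φ : MulAction.stabilizer G x →* Equiv.Perm (Fin n)),
    Function.Surjective φ ∧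
    ∀ (g : MulAction.stabilizer G x) (v : Γ.neighborSet x),
      ((e.symm (φ g • e v) : Γ.neighborSet x) : V) = g • (v : V)

/-!
Let `f` reverse the edge `{x, y}`, let `X` and `H` be the stabilisers of `x` and of the arc
`(x, y)`, and let `K` be the kernel of `X` on the neighbours of `x`, so that `X / K` is `Sym(n)` and
`H / K` is `Sym(n - 2)`. The pointwise stabiliser of the ball of radius two lies in the edge kernel
`Q = K ⊓ f K f⁻¹`. A subgroup of `H` normalised by both `X` and `f` fixes every vertex, hence is
trivial; so if `Q ≠ 1` some minimal subnormal subgroup `T` of `H` is not contained in `K`.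

If `n ≥ 7`, then `T` is isomorphic to the perfect group `Alt(n - 2)` and so centralises `K`. As the
nontrivial normal subgroups of `X / K` are transitive on the neighbours, `X` is generated by `H` and
the centraliser of `K`; both normalise `Q`, which contradicts `Q ≠ 1`.

If `n = 5`, every such `T` is a `3`-group. The minimal subnormal subgroups of `H` that are not
`3`-groups then all lie in `K`, so their span is normalised by `X` and `f` and there are none;
hence `Q ≠ 1` implies `Q ∩ O₃(H) ≠ 1`. By an argument with the Thompson subgroup of `O₃(H)`, this
needs an abelian `3`-subgroup outside `K` with a large centraliser on a normal `3`-subgroup of `X`.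
Two conjugate elements of `Sym(5)` of order `3` may have a product of order `5`, and an element of
order `5` cannot act nontrivially on a `3`-group while centralising a subgroup of index at most `9`;
so `X` is again generated by `H` and a centraliser.
-/

section Subnormal

open Subgroup

variable {G : Type*} [Group G] {H K T : Subgroup G}

/-- `T` is a subnormal subgroup of the subgroup `H` of an ambient group: the relative form of
`Subgroup.IsSubnormal`, needed because the subgroups of the argument live in different point
stabilisers of one group. -/
def SubnormalIn (H T : Subgroup G) : Prop :=
  T ≤ H ∧ (T.subgroupOf H).IsSubnormal

namespace SubnormalIn

theorem of_le_normalizer (hTH : T ≤ H) (hn : H ≤ normalizer (T : Set G)) : SubnormalIn H T :=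
  ⟨hTH, (normal_subgroupOf_of_le_normalizer hn).isSubnormal⟩

theorem mono_left (hT : SubnormalIn H T) (hTK : T ≤ K) (hKH : K ≤ H) : SubnormalIn K T :=
  ⟨hTK, hT.2.comap (inclusion hKH)⟩

theorem trans (hK : SubnormalIn H K) (hT : SubnormalIn K T) : SubnormalIn H T := by
  refine ⟨hT.1.trans hK.1, IsSubnormal.trans (K := K.subgroupOf H)
    (subgroupOf_mono H hT.1) ?_ hK.2⟩
  exact hT.2.comap ((subgroupOfEquivOfLe hK.1 : K.subgroupOf H ≃* K) : K.subgroupOf H →* K)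

theorem smul (hT : SubnormalIn H T) (a : MulAut G) : SubnormalIn (a • H) (a • T) := by
  refine ⟨smul_mono_right a hT.1, ?_⟩
  have h := hT.2.comap ((H.equivSMul a).symm : (a • H : Subgroup G) →* H)
  convert h using 1
  ext x
  obtain ⟨y, rfl⟩ := (H.equivSMul a).surjective x
  rw [mem_comap, MonoidHom.coe_coe, MulEquiv.symm_apply_apply]
  exact smul_mem_pointwise_smul_iff

@[elab_as_elim]
theorem induction {motive : Subgroup G → Prop} (hT : SubnormalIn H T) (self : motive H)
    (step : ∀ S K, SubnormalIn H K → S ≤ K → K ≤ normalizer (S : Set G) → motive K → motive S) :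
    motive T := by
  suffices h : ∀ S : Subgroup H, S.IsSubnormal → motive (S.map H.subtype) by
    have := h _ hT.2
    rwa [map_subgroupOf_eq_of_le hT.1] at this
  intro S hS
  induction hS with
  | top => simpa [← MonoidHom.range_eq_map] using self
  | step S K hSK hK hN ih =>
    rw [normal_subgroupOf_iff_le_normalizer hSK] at hN
    refine step _ (K.map H.subtype) ⟨map_subtype_le K, ?_⟩ (map_mono hSK)
      ((map_mono hN).trans (le_normalizer_map _)) ih
    rwa [subgroupOf, comap_map_eq_self_of_injective H.subtype_injective]

end SubnormalIn

/-- Three subgroups lemma, along a subnormal chain from `H` down to `T`. -/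
theorem commutator_eq_bot_of_subnormal_of_perfect (hT : SubnormalIn H T) (hKH : K ≤ H)
    (hKn : H ≤ normalizer (K : Set G)) (hTK : T ⊓ K = ⊥) (hperf : ⁅T, T⁆ = T) : ⁅K, T⁆ = ⊥ := by
  suffices h : ∀ S, SubnormalIn H S → T ≤ S → ⁅K ⊓ S, T⁆ = ⊥ → ⁅K, T⁆ = ⊥ by
    refine h T hT le_rfl ?_
    rw [inf_comm, hTK, commutator_bot_left]
  intro S hS
  refine hS.induction ?_ ?_
  · intro _ h
    rwa [inf_eq_left.2 hKH] at h
  · intro S L _ hSL hLn ih hTS h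
    refine ih (hTS.trans hSL) ?_
    have hmem : ⁅K ⊓ L, T⁆ ≤ K ⊓ S := le_inf
      ((commutator_mono inf_le_left hT.1).trans (le_normalizer_iff_commutator_le_left.1 hKn))
      ((commutator_mono inf_le_right hTS).trans (le_normalizer_iff_commutator_le_right.1 hLn))
    have hKLTT : ⁅⁅K ⊓ L, T⁆, T⁆ = ⊥ := eq_bot_iff.2 ((commutator_mono hmem le_rfl).trans h.le)
    have hTKLT : ⁅⁅T, K ⊓ L⁆, T⁆ = ⊥ := by rwa [commutator_comm T]
    have := commutator_commutator_eq_bot_of_rotate hTKLT hKLTT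
    rwa [hperf, commutator_comm] at this

end Subnormal

section Conjugation

open Subgroup

variable {G : Type*} [Group G] {A B H K : Subgroup G} {g : G}

theorem conj_smul_eq_iff_mem_normalizer : MulAut.conj g • A = A ↔ g ∈ normalizer (A : Set G) :=
  mem_normalizer_iff_map_conj_eq.symm

theorem le_normalizer_of_forall_conj_smul_le (h : ∀ g ∈ H, MulAut.conj g • A ≤ A) :
    H ≤ normalizer (A : Set G) :=
  le_normalizer_iff.2 fun g hg _ ha => h g hg (smul_mem_pointwise_smul _ (MulAut.conj g) A ha)

theorem conj_smul_le_normalizer_conj_smul (h : H ≤ normalizer (A : Set G)) (g : G) :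
    MulAut.conj g • H ≤ normalizer ((MulAut.conj g • A : Subgroup G) : Set G) :=
  (smul_mono_right (MulAut.conj g) h).trans (le_normalizer_map (MulAut.conj g).toMonoidHom)

theorem le_normalizer_sSup {S : Set (Subgroup G)} (h : ∀ g ∈ H, ∀ A ∈ S, MulAut.conj g • A ∈ S) :
    H ≤ normalizer ((sSup S : Subgroup G) : Set G) := by
  refine le_normalizer_of_forall_conj_smul_le fun g hg => ?_
  rw [pointwise_smul_subset_iff]
  refine sSup_le fun A hA => ?_
  rw [← pointwise_smul_subset_iff]
  exact le_sSup (h g hg A hA)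

theorem le_normalizer_inf (hA : H ≤ normalizer (A : Set G)) (hB : H ≤ normalizer (B : Set G)) :
    H ≤ normalizer ((A ⊓ B : Subgroup G) : Set G) :=
  (le_inf hA hB).trans inf_normalizer_le_normalizer_inf

theorem le_normalizer_sup (hA : H ≤ normalizer (A : Set G)) (hB : H ≤ normalizer (B : Set G)) :
    H ≤ normalizer ((A ⊔ B : Subgroup G) : Set G) := by
  have := iInf_normalizer_le_normalizer_iSup fun b : Bool => cond b A B
  rw [iSup_bool_eq, iInf_bool_eq] at this
  exact (le_inf hA hB).trans this

theorem le_normalizer_centralizer (hA : H ≤ normalizer (A : Set G)) :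
    H ≤ normalizer (centralizer (A : Set G) : Set G) :=
  hA.trans (le_normalizer_of_normal_subgroupOf (centralizer_le_normalizer _))

end Conjugation

section MinimalSubnormal

open Subgroup

variable {G : Type*} [Group G] {H K T : Subgroup G}

/-- `T` is a minimal nontrivial subnormal subgroup of `H`. -/
def IsMinimalSubnormalIn (H T : Subgroup G) : Prop :=
  Minimal (fun T => SubnormalIn H T ∧ T ≠ ⊥) T

theorem finite_setOf_le (H : Subgroup G) [Finite H] : {K : Subgroup G | K ≤ H}.Finite :=
  (Set.Finite.finite_subsets (H : Set G).toFinite).preimage SetLike.coe_injective.injOn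

theorem SubnormalIn.exists_isMinimalSubnormalIn_le [Finite H] (hK : SubnormalIn H K)
    (hne : K ≠ ⊥) : ∃ T ≤ K, IsMinimalSubnormalIn H T := by
  have hfin : {T | SubnormalIn H T ∧ T ≠ ⊥}.Finite :=
    (finite_setOf_le H).subset fun _ hT => hT.1.1
  exact hfin.exists_le_minimal ⟨hK, hne⟩

namespace IsMinimalSubnormalIn

theorem subnormalIn (hT : IsMinimalSubnormalIn H T) : SubnormalIn H T := hT.prop.1

theorem ne_bot (hT : IsMinimalSubnormalIn H T) : T ≠ ⊥ := hT.prop.2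

theorem le (hT : IsMinimalSubnormalIn H T) : T ≤ H := hT.subnormalIn.1

theorem eq_of_le (hT : IsMinimalSubnormalIn H T) (hK : SubnormalIn H K) (hne : K ≠ ⊥)
    (hKT : K ≤ T) : K = T :=
  Minimal.eq_of_le hT ⟨hK, hne⟩ hKT

theorem conj_smul (hT : IsMinimalSubnormalIn H T) (a : MulAut G) :
    IsMinimalSubnormalIn (a • H) (a • T) := by
  have smul_ne_bot : ∀ (b : MulAut G) {S : Subgroup G}, S ≠ ⊥ → b • S ≠ ⊥ := fun b S hS h =>
    hS (by rw [← inv_smul_smul b S, h, smul_bot])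
  refine ⟨⟨hT.subnormalIn.smul a, smul_ne_bot a hT.ne_bot⟩, fun S hS hST => ?_⟩
  rw [pointwise_smul_subset_iff]
  refine hT.2 ⟨?_, smul_ne_bot a⁻¹ hS.2⟩ (by rwa [← subset_pointwise_smul_iff])
  simpa only [inv_smul_smul] using hS.1.smul a⁻¹

theorem mono_left (hT : IsMinimalSubnormalIn H T) (hTK : T ≤ K) (hK : SubnormalIn H K) :
    IsMinimalSubnormalIn K T :=
  ⟨⟨hT.subnormalIn.mono_left hTK hK.1, hT.ne_bot⟩,
    fun _ hS hST => hT.2 ⟨hK.trans hS.1, hS.2⟩ hST⟩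

theorem trans (hT : IsMinimalSubnormalIn K T) (hK : SubnormalIn H K) :
    IsMinimalSubnormalIn H T :=
  ⟨⟨hK.trans hT.subnormalIn, hT.ne_bot⟩,
    fun _ hS hST => hT.2 ⟨hS.1.mono_left (hST.trans hT.le) hK.1, hS.2⟩ hST⟩

theorem inf_eq_bot_of_not_le (hT : IsMinimalSubnormalIn H T) (hKn : H ≤ normalizer (K : Set G))
    (hTK : ¬ T ≤ K) : T ⊓ K = ⊥ := by
  by_contra hne
  refine hTK (inf_eq_left.1 (hT.eq_of_le (hT.subnormalIn.trans ?_) hne inf_le_left))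
  exact .of_le_normalizer inf_le_left (le_normalizer_inf le_normalizer (hT.le.trans hKn))

theorem commutator_eq_self (hT : IsMinimalSubnormalIn H T)
    (hcomm : ¬ T ≤ centralizer (T : Set G)) : ⁅T, T⁆ = T := by
  have hle : ⁅T, T⁆ ≤ T := commutator_le_self T
  refine hT.eq_of_le (hT.subnormalIn.trans (.of_le_normalizer hle ?_))
    (mt commutator_eq_bot_iff_le_centralizer.1 hcomm) hle
  exact le_normalizer_iff_commutator_le_right.2 (commutator_mono le_rfl hle)

end IsMinimalSubnormalIn

end MinimalSubnormal

section PCore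

open Subgroup

variable {G : Type*} [Group G] {p : ℕ} {H K T B : Subgroup G}

/-- The largest normal `p`-subgroup `O_p(H)` of `H`, as a subgroup of the ambient group. -/
def pCore (p : ℕ) (H : Subgroup G) : Subgroup G :=
  sSup {B | B ≤ H ∧ IsPGroup p B ∧ H ≤ normalizer (B : Set G)}

theorem pCore_le : pCore p H ≤ H := sSup_le fun _ hB => hB.1

theorem le_pCore (hBH : B ≤ H) (hB : IsPGroup p B) (hn : H ≤ normalizer (B : Set G)) :
    B ≤ pCore p H :=
  le_sSup ⟨hBH, hB, hn⟩

theorem isPGroup_pCore : IsPGroup p (pCore p H) := by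
  have hne : {B | B ≤ H ∧ IsPGroup p B ∧ H ≤ normalizer (B : Set G)}.Nonempty :=
    ⟨⊥, bot_le, IsPGroup.of_bot,
      le_normalizer_of_forall_conj_smul_le fun _ _ => (smul_bot _).le⟩
  have hdir : DirectedOn (· ≤ ·) {B | B ≤ H ∧ IsPGroup p B ∧ H ≤ normalizer (B : Set G)} :=
    fun B hB C hC => ⟨B ⊔ C, ⟨sup_le hB.1 hC.1,
      hB.2.1.to_sup_of_normal_right' hC.2.1 (hB.1.trans hC.2.2),
      le_normalizer_sup hB.2.2 hC.2.2⟩, le_sup_left, le_sup_right⟩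
  rintro ⟨g, hg⟩
  obtain ⟨B, hB, hgB⟩ := (mem_sSup_of_directedOn hne hdir).1 hg
  obtain ⟨k, hk⟩ := hB.2.1 ⟨g, hgB⟩
  exact ⟨k, Subtype.ext (by simpa using congrArg Subtype.val hk)⟩

theorem normalizer_le_normalizer_pCore :
    normalizer (H : Set G) ≤ normalizer (pCore p H : Set G) := by
  refine le_normalizer_sSup fun g hg B hB => ?_
  have hgH : MulAut.conj g • H = H := conj_smul_eq_iff_mem_normalizer.2 hg
  refine ⟨?_, hB.2.1.map _, ?_⟩
  · rw [← hgH]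
    exact smul_mono_right _ hB.1
  · have := conj_smul_le_normalizer_conj_smul hB.2.2 g
    rwa [hgH] at this

theorem SubnormalIn.pCore_le_pCore (hT : SubnormalIn H T) : pCore p T ≤ pCore p H := by
  refine hT.induction le_rfl fun S K _ hSK hn ih => le_trans ?_ ih
  exact le_pCore (pCore_le.trans hSK) isPGroup_pCore (hn.trans normalizer_le_normalizer_pCore)

theorem SubnormalIn.le_pCore (hT : SubnormalIn H T) (hp : IsPGroup p T) : T ≤ pCore p H :=
  (_root_.le_pCore le_rfl hp le_normalizer).trans hT.pCore_le_pCore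

theorem pCore_inf_eq_pCore_of_le_normalizer (hKH : K ≤ H) (hn : H ≤ normalizer (K : Set G)) :
    pCore p H ⊓ K = pCore p K := by
  refine le_antisymm ?_ (le_inf (SubnormalIn.of_le_normalizer hKH hn).pCore_le_pCore pCore_le)
  refine le_pCore inf_le_right (isPGroup_pCore.to_le inf_le_left) ?_
  exact le_normalizer_inf (hKH.trans (le_normalizer.trans normalizer_le_normalizer_pCore))
    le_normalizer

theorem inf_centralizer_ne_bot_of_isPGroup [Fact p.Prime] [Finite H] (hp : IsPGroup p H)
    (hne : H ≠ ⊥) : H ⊓ centralizer (H : Set G) ≠ ⊥ := by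
  have : Nontrivial H := (nontrivial_iff_ne_bot H).2 hne
  obtain ⟨z, hz, hz1⟩ := (nontrivial_iff_exists_ne_one _).1 hp.center_nontrivial
  have hzC : (z : G) ∈ H ⊓ centralizer (H : Set G) :=
    ⟨z.2, fun h hh => congrArg Subtype.val (mem_center_iff.1 hz ⟨h, hh⟩)⟩
  intro hbot
  rw [hbot, mem_bot] at hzC
  exact hz1 (Subtype.ext hzC)

end PCore

section ThompsonSubgroup

open Subgroup

variable {G : Type*} [Group G] {P Q A B D V : Subgroup G}

theorem conj_smul_le_centralizer_conj_smul (hA : A ≤ centralizer (A : Set G)) (g : G) :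
    MulAut.conj g • A ≤ centralizer ((MulAut.conj g • A : Subgroup G) : Set G) := by
  refine (smul_mono_right (MulAut.conj g) hA).trans ?_
  have := map_centralizer_le_centralizer_image (A : Set G) (MulAut.conj g).toMonoidHom
  exact this

theorem relIndex_ne_zero_of_finite [Finite V] : D.relIndex V ≠ 0 :=
  ne_zero_of_dvd_ne_zero Nat.card_pos.ne' (relIndex_dvd_card D V)

theorem card_mul_relIndex_of_le (h : A ≤ B) : Nat.card A * A.relIndex B = Nat.card B := by
  simpa only [relIndex_bot_left] using relIndex_mul_relIndex ⊥ A B bot_le h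

theorem sup_le_centralizer_sup (hA : A ≤ centralizer (A : Set G))
    (hB : B ≤ centralizer (B : Set G)) (hAB : A ≤ centralizer (B : Set G)) :
    A ⊔ B ≤ centralizer ((A ⊔ B : Subgroup G) : Set G) :=
  sup_le (le_centralizer_iff.2 (sup_le hA (le_centralizer_iff.2 hAB)))
    (le_centralizer_iff.2 (sup_le hAB hB))

/-- `A` is an abelian subgroup of `P` of largest possible order. Commutativity of a subgroup is
written `A ≤ centralizer A`. -/
def IsLargestAbelianIn (P A : Subgroup G) : Prop :=
  MaximalFor (fun B : Subgroup G => B ≤ P ∧ B ≤ centralizer (B : Set G))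
    (fun B => Nat.card B) A

namespace IsLargestAbelianIn

theorem le (hA : IsLargestAbelianIn P A) : A ≤ P := hA.prop.1

theorem le_centralizer (hA : IsLargestAbelianIn P A) : A ≤ centralizer (A : Set G) := hA.prop.2

theorem card_le (hA : IsLargestAbelianIn P A) (hBP : B ≤ P) (hB : B ≤ centralizer (B : Set G)) :
    Nat.card B ≤ Nat.card A :=
  (le_total (Nat.card A) (Nat.card B)).elim (hA.2 ⟨hBP, hB⟩) id

theorem conj_smul (hA : IsLargestAbelianIn P A) {g : G} (hg : g ∈ normalizer (P : Set G)) :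
    IsLargestAbelianIn P (MulAut.conj g • A) := by
  refine ⟨⟨?_, conj_smul_le_centralizer_conj_smul hA.le_centralizer g⟩, fun B hB _ => ?_⟩
  · rw [← conj_smul_eq_iff_mem_normalizer.2 hg]
    exact smul_mono_right _ hA.le
  · exact (hA.card_le hB.1 hB.2).trans_eq (Nat.card_congr (A.equivSMul (MulAut.conj g)).toEquiv)

theorem relIndex_centralizer_le [Finite P] (hA : IsLargestAbelianIn P A) (hD : D ≤ A) (hVP : V ≤ P)
    (hV : V ≤ centralizer (V : Set G)) (hDV : D ≤ centralizer (V : Set G)) :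
    (centralizer (A : Set G)).relIndex V ≤ D.relIndex A := by
  have hDc : D ≤ centralizer (D : Set G) := (hD.trans hA.le_centralizer).trans (centralizer_le hD)
  have hDVP : D ⊔ V ≤ P := sup_le (hD.trans hA.le) hVP
  have hcard : Nat.card (D ⊔ V : Subgroup G) ≤ Nat.card A :=
    hA.card_le hDVP (sup_le_centralizer_sup hDc hV hDV)
  have hfin : Finite (D ⊔ V : Subgroup G) := Finite.of_injective _ (inclusion_injective hDVP)
  have hfinV : Finite V := Finite.of_injective _ (inclusion_injective hVP)
  have hfinD : Finite D := Finite.of_injective _ (inclusion_injective (hD.trans hA.le))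
  have hsup : D.relIndex (D ⊔ V) ≤ D.relIndex A := by
    refine Nat.le_of_mul_le_mul_left ?_ (Nat.card_pos (α := D))
    rwa [card_mul_relIndex_of_le le_sup_left, card_mul_relIndex_of_le hD]
  calc (centralizer (A : Set G)).relIndex V
      ≤ D.relIndex V := relIndex_le_of_le_left (hD.trans hA.le_centralizer)
        relIndex_ne_zero_of_finite
    _ ≤ D.relIndex (D ⊔ V) := relIndex_le_of_le_right le_sup_right relIndex_ne_zero_of_finite
    _ ≤ D.relIndex A := hsup

end IsLargestAbelianIn

theorem exists_isLargestAbelianIn (P : Subgroup G) [Finite P] : ∃ A, IsLargestAbelianIn P A := by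
  have hfin : {B : Subgroup G | B ≤ P ∧ B ≤ centralizer (B : Set G)}.Finite :=
    (finite_setOf_le P).subset fun _ hB => hB.1
  exact hfin.exists_maximalFor _ _ ⟨⊥, bot_le, bot_le⟩

/-- The Thompson subgroup of `P`, generated by the abelian subgroups of largest order. -/
def thompsonSubgroup (P : Subgroup G) : Subgroup G :=
  sSup {A | IsLargestAbelianIn P A}

theorem IsLargestAbelianIn.le_thompsonSubgroup (hA : IsLargestAbelianIn P A) :
    A ≤ thompsonSubgroup P :=
  le_sSup hA

theorem thompsonSubgroup_le : thompsonSubgroup P ≤ P := sSup_le fun _ hA => hA.le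

theorem normalizer_le_normalizer_thompsonSubgroup :
    normalizer (P : Set G) ≤ normalizer (thompsonSubgroup P : Set G) :=
  le_normalizer_sSup fun _ hg _ hA => hA.conj_smul hg

theorem thompsonSubgroup_eq_of_le [Finite P] (hJ : thompsonSubgroup P ≤ Q) (hQP : Q ≤ P) :
    thompsonSubgroup Q = thompsonSubgroup P := by
  have hle : ∀ {A}, IsLargestAbelianIn P A → A ≤ Q := fun hA => hA.le_thompsonSubgroup.trans hJ
  obtain ⟨A₀, hA₀⟩ := exists_isLargestAbelianIn P
  refine congrArg sSup (Set.ext fun A => ⟨fun hA => ?_, fun hA => ?_⟩)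
  · refine ⟨⟨hA.le.trans hQP, hA.le_centralizer⟩, fun B hB _ => ?_⟩
    exact (hA₀.card_le hB.1 hB.2).trans (hA.card_le (hle hA₀) hA₀.le_centralizer)
  · exact ⟨⟨hle hA, hA.le_centralizer⟩, fun B hB _ => hA.card_le (hB.1.trans hQP) hB.2⟩

theorem thompsonSubgroup_ne_bot [Finite P] (hP : P ≠ ⊥) : thompsonSubgroup P ≠ ⊥ := by
  intro hJ
  obtain ⟨A, hA⟩ := exists_isLargestAbelianIn P
  have hAbot : A = ⊥ := eq_bot_iff.2 (hA.le_thompsonSubgroup.trans hJ.le)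
  refine hP ((eq_bot_iff_forall P).2 fun g hg => ?_)
  have hcard := hA.card_le (zpowers_le.2 hg) (le_centralizer (zpowers g))
  rw [hAbot, card_bot] at hcard
  have : Finite (zpowers g) := Finite.of_injective _ (inclusion_injective (zpowers_le.2 hg))
  exact zpowers_eq_bot.1 (eq_bot_of_card_le _ hcard)

end ThompsonSubgroup

section Amalgam

open Subgroup

variable {G : Type*} [Group G] {X H K : Subgroup G} {f : G} {p : ℕ}

/-- The subgroups attached to an edge `{x, y}` of a graph on which a group acts with quasiprimitive
local action: `X` is the stabiliser of `x`, `H` the stabiliser of the arc `(x, y)`, `K` the kernel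
of the action of `X` on the neighbours of `x`, and `f` reverses the edge. Connectedness and
faithfulness of the action enter as `eq_bot_of_le_normalizer`; transitivity of the normal subgroups
of the local action that are not in its kernel is `le_sup_of_not_le`. -/
structure QuasiprimitiveAmalgam (X H K : Subgroup G) (f : G) : Prop where
  kernel_le : K ≤ H
  arc_le : H ≤ X
  le_normalizer_kernel : X ≤ normalizer (K : Set G)
  mem_normalizer_arc : f ∈ normalizer (H : Set G)
  mul_self_mem : f * f ∈ H
  eq_bot_of_le_normalizer : ∀ M ≤ H, X ≤ normalizer (M : Set G) →
    f ∈ normalizer (M : Set G) → M = ⊥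
  le_sup_of_not_le : ∀ D ≤ X, X ≤ normalizer (D : Set G) → ¬ D ≤ K → X ≤ D ⊔ H

namespace QuasiprimitiveAmalgam

/-- The kernel of the action of the edge stabiliser on the neighbours of both ends of the edge. -/
def edgeKernel (K : Subgroup G) (f : G) : Subgroup G := K ⊓ MulAut.conj f • K

/-- In the language of failure of factorisation: no `p`-subgroup of `H` outside `K` is an offender
on a normal `p`-subgroup `V` of `X`, unless `X ⊓ centralizer V` is not in `K`. -/
def NoOffender (p : ℕ) (X H K : Subgroup G) : Prop :=
  ∀ A V : Subgroup G, A ≤ H → IsPGroup p A → ¬ A ≤ K → V ≤ X → IsPGroup p V →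
    X ≤ normalizer (V : Set G) → (centralizer (A : Set G)).relIndex V ≤ K.relIndex A →
    ¬ X ⊓ centralizer (V : Set G) ≤ K

variable (S : QuasiprimitiveAmalgam X H K f)
include S

theorem arc_le_normalizer_kernel : H ≤ normalizer (K : Set G) :=
  S.arc_le.trans S.le_normalizer_kernel

theorem subnormalIn_kernel : SubnormalIn H K :=
  .of_le_normalizer S.kernel_le S.arc_le_normalizer_kernel

theorem edgeKernel_le : edgeKernel K f ≤ H := inf_le_left.trans S.kernel_le

theorem mem_normalizer_edgeKernel : f ∈ normalizer (edgeKernel K f : Set G) := by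
  have hff : MulAut.conj (f * f) • K = K :=
    conj_smul_eq_iff_mem_normalizer.2 (S.arc_le_normalizer_kernel S.mul_self_mem)
  rw [← conj_smul_eq_iff_mem_normalizer, edgeKernel, smul_inf, smul_smul, ← map_mul, hff, inf_comm]

theorem le_normalizer_edgeKernel : H ≤ normalizer (edgeKernel K f : Set G) := by
  refine le_normalizer_inf S.arc_le_normalizer_kernel ?_
  have h := conj_smul_le_normalizer_conj_smul S.arc_le_normalizer_kernel f
  rwa [conj_smul_eq_iff_mem_normalizer.2 S.mem_normalizer_arc] at h

/-- By quasiprimitivity `X` is generated by `X ⊓ centralizer V` and `H`; both normalise `U`. -/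
theorem eq_bot_of_not_inf_centralizer_le {U V : Subgroup G} (hV : X ≤ normalizer (V : Set G))
    (hVK : ¬ X ⊓ centralizer (V : Set G) ≤ K) (hUV : U ≤ V) (hUH : U ≤ H)
    (hHU : H ≤ normalizer (U : Set G)) (hfU : f ∈ normalizer (U : Set G)) : U = ⊥ := by
  refine S.eq_bot_of_le_normalizer U hUH ?_ hfU
  refine (S.le_sup_of_not_le _ inf_le_left
    (le_normalizer_inf le_normalizer (le_normalizer_centralizer hV)) hVK).trans (sup_le ?_ hHU)
  exact inf_le_right.trans ((centralizer_le hUV).trans (centralizer_le_normalizer _))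

theorem exists_isMinimalSubnormalIn_not_le {C : Subgroup G → Prop}
    (hC : ∀ (T : Subgroup G) (g : G), C T → C (MulAut.conj g • T)) {T : Subgroup G}
    (hT : IsMinimalSubnormalIn H T) (hCT : C T) :
    ∃ T, IsMinimalSubnormalIn H T ∧ C T ∧ ¬ T ≤ K := by
  by_contra! hle
  have hbot : sSup {T | IsMinimalSubnormalIn H T ∧ C T} = ⊥ := by
    refine S.eq_bot_of_le_normalizer _ (sSup_le fun T hT => hT.1.le) ?_ ?_
    · refine le_normalizer_sSup fun g hg T hT => ⟨?_, hC T g hT.2⟩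
      have hTK := (hT.1.mono_left (hle T hT.1 hT.2) S.subnormalIn_kernel).conj_smul (MulAut.conj g)
      rw [conj_smul_eq_iff_mem_normalizer.2 (S.le_normalizer_kernel hg)] at hTK
      exact hTK.trans S.subnormalIn_kernel
    · have hH : normalizer (H : Set G) ≤
          normalizer ((sSup {T | IsMinimalSubnormalIn H T ∧ C T} : Subgroup G) : Set G) := by
        refine le_normalizer_sSup fun g hg T hT => ⟨?_, hC T g hT.2⟩
        have hgT := hT.1.conj_smul (MulAut.conj g)
        rwa [conj_smul_eq_iff_mem_normalizer.2 hg] at hgT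
      exact hH S.mem_normalizer_arc
  have hTbot := le_sSup (show T ∈ {T | IsMinimalSubnormalIn H T ∧ C T} from ⟨hT, hCT⟩)
  exact hT.ne_bot (eq_bot_iff.2 (hTbot.trans hbot.le))

theorem exists_isMinimalSubnormalIn_le_edgeKernel [Finite H] (hne : edgeKernel K f ≠ ⊥) :
    ∃ T ≤ edgeKernel K f, IsMinimalSubnormalIn H T :=
  (SubnormalIn.of_le_normalizer S.edgeKernel_le S.le_normalizer_edgeKernel)
    |>.exists_isMinimalSubnormalIn_le hne

theorem edgeKernel_eq_bot_of_not_le_centralizer [Finite H]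
    (hT : ∀ T, IsMinimalSubnormalIn H T → ¬ T ≤ K → ¬ T ≤ centralizer (T : Set G)) :
    edgeKernel K f = ⊥ := by
  by_contra hne
  obtain ⟨T₀, -, hT₀⟩ := S.exists_isMinimalSubnormalIn_le_edgeKernel hne
  obtain ⟨T, hTmin, -, hTK⟩ :=
    S.exists_isMinimalSubnormalIn_not_le (C := fun _ => True) (fun _ _ _ => trivial) hT₀ trivial
  have hKT : ⁅K, T⁆ = ⊥ := commutator_eq_bot_of_subnormal_of_perfect hTmin.subnormalIn S.kernel_le
    S.arc_le_normalizer_kernel (hTmin.inf_eq_bot_of_not_le S.arc_le_normalizer_kernel hTK)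
    (hTmin.commutator_eq_self (hT T hTmin hTK))
  rw [commutator_comm, commutator_eq_bot_iff_le_centralizer] at hKT
  refine hne (S.eq_bot_of_not_inf_centralizer_le S.le_normalizer_kernel (fun hle => hTK ?_)
    inf_le_left S.edgeKernel_le S.le_normalizer_edgeKernel S.mem_normalizer_edgeKernel)
  exact (le_inf (hTmin.le.trans S.arc_le) hKT).trans hle

theorem mem_normalizer_pCore : f ∈ normalizer (pCore p H : Set G) :=
  normalizer_le_normalizer_pCore S.mem_normalizer_arc

theorem le_normalizer_pCore_inf : X ≤ normalizer ((pCore p H ⊓ K : Subgroup G) : Set G) := by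
  rw [pCore_inf_eq_pCore_of_le_normalizer S.kernel_le S.arc_le_normalizer_kernel]
  exact S.le_normalizer_kernel.trans normalizer_le_normalizer_pCore

theorem exists_isLargestAbelianIn_pCore_not_le [Finite H] (hne : pCore p H ≠ ⊥) :
    ∃ A, IsLargestAbelianIn (pCore p H) A ∧ ¬ A ≤ K := by
  by_contra! hle
  have hfin : Finite (pCore p H) := Finite.of_injective _ (inclusion_injective pCore_le)
  have hJ : thompsonSubgroup (pCore p H ⊓ K) = thompsonSubgroup (pCore p H) :=
    thompsonSubgroup_eq_of_le (le_inf thompsonSubgroup_le (sSup_le hle)) inf_le_left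
  refine thompsonSubgroup_ne_bot hne (S.eq_bot_of_le_normalizer _
    (thompsonSubgroup_le.trans pCore_le) ?_ ?_)
  · rw [← hJ]
    exact S.le_normalizer_pCore_inf.trans normalizer_le_normalizer_thompsonSubgroup
  · exact normalizer_le_normalizer_thompsonSubgroup S.mem_normalizer_pCore

theorem pCore_inf_centralizer_not_le [Finite H] [Fact p.Prime] (hoff : NoOffender p X H K)
    (hne : pCore p H ≠ ⊥) : ¬ pCore p H ⊓ centralizer (pCore p H : Set G) ≤ K := by
  intro hZK
  have hfin : Finite (pCore p H) := Finite.of_injective _ (inclusion_injective pCore_le)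
  obtain ⟨A, hA, hAK⟩ := S.exists_isLargestAbelianIn_pCore_not_le hne
  set W := pCore p H ⊓ K
  set V := W ⊓ centralizer (W : Set G)
  have hWP : W ≤ pCore p H := inf_le_left
  have hVP : V ≤ pCore p H := inf_le_left.trans hWP
  have hXV : X ≤ normalizer (V : Set G) :=
    le_normalizer_inf S.le_normalizer_pCore_inf
      (le_normalizer_centralizer S.le_normalizer_pCore_inf)
  have hindex : (centralizer (A : Set G)).relIndex V ≤ K.relIndex A := by
    rw [← inf_relIndex_left A K]
    refine hA.relIndex_centralizer_le inf_le_left hVP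
      (inf_le_right.trans (centralizer_le inf_le_left)) (le_centralizer_iff.1 ?_)
    exact inf_le_right.trans (centralizer_le (inf_le_inf_right K hA.le))
  have hVK := hoff A V (hA.le.trans pCore_le) (isPGroup_pCore.to_le hA.le) hAK
    (hVP.trans (pCore_le.trans S.arc_le)) (isPGroup_pCore.to_le hVP) hXV hindex
  have hZV : pCore p H ⊓ centralizer (pCore p H : Set G) ≤ V :=
    le_inf (le_inf inf_le_left hZK) (inf_le_right.trans (centralizer_le hWP))
  refine inf_centralizer_ne_bot_of_isPGroup isPGroup_pCore hne
    (S.eq_bot_of_not_inf_centralizer_le hXV hVK hZV (inf_le_left.trans pCore_le) ?_ ?_)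
  · have hHP : H ≤ normalizer (pCore p H : Set G) :=
      le_normalizer.trans normalizer_le_normalizer_pCore
    exact le_normalizer_inf hHP (le_normalizer_centralizer hHP)
  · exact le_normalizer_inf le_rfl (le_normalizer_centralizer le_rfl) S.mem_normalizer_pCore

theorem pCore_inf_edgeKernel_eq_bot
    (hZK : ¬ pCore p H ⊓ centralizer (pCore p H : Set G) ≤ K) :
    pCore p H ⊓ edgeKernel K f = ⊥ := by
  refine S.eq_bot_of_not_inf_centralizer_le S.le_normalizer_pCore_inf (fun hle => hZK ?_)
    (inf_le_inf_left _ inf_le_left) (inf_le_left.trans pCore_le)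
    (le_normalizer_inf (le_normalizer.trans normalizer_le_normalizer_pCore)
      S.le_normalizer_edgeKernel)
    (inf_normalizer_le_normalizer_inf ⟨S.mem_normalizer_pCore, S.mem_normalizer_edgeKernel⟩)
  exact (inf_le_inf (pCore_le.trans S.arc_le) (centralizer_le inf_le_left)).trans hle

theorem edgeKernel_eq_bot_of_isPGroup [Finite H] [Fact p.Prime]
    (hT : ∀ T, IsMinimalSubnormalIn H T → ¬ T ≤ K → IsPGroup p T) (hoff : NoOffender p X H K) :
    edgeKernel K f = ⊥ := by
  by_contra hne
  obtain ⟨T, hTQ, hTmin⟩ := S.exists_isMinimalSubnormalIn_le_edgeKernel hne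
  have hTp : IsPGroup p T := by
    by_contra hnp
    obtain ⟨T', hT', hnp', hTK'⟩ := S.exists_isMinimalSubnormalIn_not_le
      (C := fun T => ¬ IsPGroup p T)
      (fun T g h h' => h (h'.of_equiv (T.equivSMul (MulAut.conj g)).symm)) hTmin hnp
    exact hnp' (hT T' hT' hTK')
  have hTP : T ≤ pCore p H := hTmin.subnormalIn.le_pCore hTp
  have hTbot : T ≤ ⊥ := (le_inf hTP hTQ).trans (S.pCore_inf_edgeKernel_eq_bot
    (S.pCore_inf_centralizer_not_le hoff fun h => hTmin.ne_bot (eq_bot_iff.2 (hTP.trans h.le)))).le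
  exact hTmin.ne_bot (eq_bot_iff.2 hTbot)

end QuasiprimitiveAmalgam

end Amalgam

section SimpleNormalSubgroup

open Subgroup

variable {G L : Type*} [Group G] [Group L] {H K T : Subgroup G} {N : Subgroup L}

theorem le_of_isSubnormal_of_ne_bot [N.Normal] [IsSimpleGroup N]
    (hN : centralizer (N : Set L) ≤ N) {M : Subgroup L} (hM : M.IsSubnormal) (hne : M ≠ ⊥) :
    N ≤ M := by
  induction hM with
  | top => exact le_top
  | step M P hMP _ hMn ih =>
    have hNM : N ≤ normalizer (M : Set L) :=
      (ih (ne_bot_of_le_ne_bot hne hMP)).trans ((normal_subgroupOf_iff_le_normalizer hMP).1 hMn)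
    rcases (normal_subgroupOf_of_le_normalizer hNM).eq_bot_or_eq_top with h | h
    · have hdisj : M ⊓ N = ⊥ := disjoint_iff.1 (subgroupOf_eq_bot.1 h)
      have hcomm : ⁅M, N⁆ = ⊥ := eq_bot_iff.2 <| hdisj ▸
        le_inf (le_normalizer_iff_commutator_le_left.1 hNM) (commutator_le_right M N)
      have hMN : M ≤ N := (commutator_eq_bot_iff_le_centralizer.1 hcomm).trans hN
      exact absurd (inf_eq_left.2 hMN ▸ hdisj) hne
    · exact subgroupOf_eq_top.1 h

theorem IsMinimalSubnormalIn.map_subgroupOf_eq [N.Normal] [IsSimpleGroup N]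
    (hN : centralizer (N : Set L) ≤ N) {ψ : H →* L} (hψ : Function.Surjective ψ)
    (hker : ψ.ker = K.subgroupOf H) (hT : IsMinimalSubnormalIn H T) (hTK : ¬ T ≤ K) :
    (T.subgroupOf H).map ψ = N := by
  have hNT : N ≤ (T.subgroupOf H).map ψ := by
    refine le_of_isSubnormal_of_ne_bot hN (hT.subnormalIn.2.map hψ) fun hbot => hTK ?_
    rw [Subgroup.map_eq_bot_iff, hker] at hbot
    exact fun t ht => hbot (show ⟨t, hT.le ht⟩ ∈ T.subgroupOf H from ht)
  refine le_antisymm (map_le_iff_le_comap.2 ?_) hNT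
  let M : Subgroup H := T.subgroupOf H ⊓ N.comap ψ
  have hMN : M.map ψ = N := by
    refine le_antisymm (map_le_iff_le_comap.2 inf_le_right) fun n hn => ?_
    obtain ⟨t, ht, rfl⟩ := hNT hn
    exact ⟨t, ⟨ht, hn⟩, rfl⟩
  have hMT : M.map H.subtype ≤ T := map_le_iff_le_comap.2 inf_le_left
  have hM : SubnormalIn H (M.map H.subtype) := by
    refine ⟨map_subtype_le M, ?_⟩
    rw [subgroupOf, comap_map_eq_self_of_injective H.subtype_injective]
    exact hT.subnormalIn.2.inf (Normal.comap ‹_› ψ).isSubnormal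
  have hMbot : M.map H.subtype ≠ ⊥ := fun h => by
    rw [map_eq_bot_iff_of_injective M H.subtype_injective] at h
    rw [h, Subgroup.map_bot] at hMN
    exact (nontrivial_iff_ne_bot N).1 inferInstance hMN.symm
  rw [← hT.eq_of_le hM hMbot hMT, subgroupOf, comap_map_eq_self_of_injective H.subtype_injective]
  exact inf_le_right

theorem IsMinimalSubnormalIn.nonempty_mulEquiv [N.Normal] [IsSimpleGroup N]
    (hN : centralizer (N : Set L) ≤ N) {ψ : H →* L} (hψ : Function.Surjective ψ)
    (hker : ψ.ker = K.subgroupOf H) (hT : IsMinimalSubnormalIn H T) (hTK : ¬ T ≤ K) :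
    Nonempty (T ≃* N) := by
  have hn : H ≤ normalizer ((K ⊓ H : Subgroup G) : Set G) :=
    normal_subgroupOf_iff_le_normalizer_inf.1 (hker ▸ ψ.normal_ker)
  have hTKH : T ⊓ (K ⊓ H) = ⊥ :=
    hT.inf_eq_bot_of_not_le hn fun h => hTK (h.trans inf_le_left)
  have hinj : Function.Injective (ψ.comp (inclusion hT.le)) := by
    refine (injective_iff_map_eq_one _).2 fun t ht => Subtype.ext ?_
    have htK : inclusion hT.le t ∈ K.subgroupOf H := hker ▸ ht
    rw [OneMemClass.coe_one, ← mem_bot, ← hTKH]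
    exact ⟨t.2, htK, hT.le t.2⟩
  have hrange : (ψ.comp (inclusion hT.le)).range = N := by
    rw [← MonoidHom.map_range, inclusion_range, hT.map_subgroupOf_eq hN hψ hker hTK]
  exact ⟨(MonoidHom.ofInjective hinj).trans (MulEquiv.subgroupCongr hrange)⟩

end SimpleNormalSubgroup

section AlternatingGroup

open Subgroup Equiv

variable {α : Type*} [Fintype α] [DecidableEq α]

theorem exists_isThreeCycle (hα : 3 ≤ Nat.card α) : ∃ c : Perm α, c.IsThreeCycle := by
  rw [Nat.card_eq_fintype_card] at hα
  obtain ⟨a, b, c, hab, hac, hbc⟩ := Fintype.two_lt_card_iff.1 hα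
  exact ⟨_, Perm.isThreeCycle_swap_mul_swap_same hab hac hbc⟩

theorem centralizer_alternatingGroup_le (hα : 3 ≤ Nat.card α) :
    centralizer (alternatingGroup α : Set (Perm α)) ≤ alternatingGroup α := by
  rcases le_or_gt 5 (Nat.card α) with h5 | h5
  · by_contra hle
    have hnt : Nontrivial (centralizer (alternatingGroup α : Set (Perm α))) :=
      (nontrivial_iff_ne_bot _).2 fun h => hle (h ▸ bot_le)
    have hcomm := le_centralizer_iff_isMulCommutative.1
      (Perm.alternatingGroup_le_of_normal h5 hnt)
    have := alternatingGroup.isMulCommutative_iff_card_le_three.1 hcomm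
    omega
  · obtain ⟨c, hc⟩ := exists_isThreeCycle hα
    refine le_trans (centralizer_le (Set.singleton_subset_iff.2 hc.mem_alternatingGroup)) ?_
    rw [Nat.card_eq_fintype_card] at h5
    rw [Perm.centralizer_le_alternating_iff, hc.cycleType]
    refine ⟨by simp [Nat.odd_iff], by simpa using Nat.lt_succ_iff.1 h5, ?_⟩
    exact Multiset.nodup_iff_count_le_one.1 (Multiset.nodup_singleton 3)

theorem isSimpleGroup_alternatingGroup (hα : Nat.card α = 3 ∨ 5 ≤ Nat.card α) :
    IsSimpleGroup (alternatingGroup α) := by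
  rcases hα with h3 | h5
  · have : Fact (Nat.Prime 3) := ⟨Nat.prime_three⟩
    have : Nontrivial α := Finite.one_lt_card_iff_nontrivial.1 (by omega)
    exact isSimpleGroup_of_prime_card (p := 3) (by rw [nat_card_alternatingGroup, h3]; rfl)
  · exact alternatingGroup.isSimpleGroup h5

end AlternatingGroup

section CoprimeAction

open Subgroup

variable {G L : Type*} [Group G] [Group L] {p q : ℕ} {H K V A : Subgroup G}

theorem relIndex_centralizer_modEq_one [Fact q.Prime] [Finite V] {d : G}
    (hd : IsPGroup q (zpowers d)) (hdV : d ∈ normalizer (V : Set G))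
    (hcop : q.Coprime (Nat.card V)) : (centralizer {d}).relIndex V ≡ 1 [MOD q] := by
  let _ : MulAction (zpowers d) V := MulAction.compHom V (inclusion (zpowers_le.2 hdV))
  have hfix : fixedPoints (zpowers d) V = ((centralizer {d}).subgroupOf V : Set V) := by
    ext v
    have hiff : ∀ g : zpowers d, g • v = v ↔ Commute (g : G) v := fun g => by
      rw [Subtype.ext_iff, commute_iff_eq, ← mul_inv_eq_iff_eq_mul]
      rfl
    rw [mem_fixedPoints, SetLike.mem_coe, mem_subgroupOf, mem_centralizer_singleton_iff]
    refine ⟨fun h => ((hiff ⟨d, mem_zpowers d⟩).1 (h _)).symm, fun h => ?_⟩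
    rintro ⟨_, k, rfl⟩
    exact (hiff _).2 (Commute.zpow_left (Eq.symm h) k)
  have hcard := hd.card_modEq_card_fixedPoints V
  rw [hfix, ← ((centralizer {d}).subgroupOf V).card_mul_index] at hcard
  refine Nat.ModEq.cancel_left_of_coprime
    (hcop.coprime_dvd_right ((centralizer {d}).subgroupOf V).card_subgroup_dvd_card) ?_
  rwa [mul_one]

theorem exists_pow_notMem_isPGroup_zpowers [Fact q.Prime] {r : G} (hfin : IsOfFinOrder r)
    (hr : r ∉ K) (hrq : r ^ q ∈ K) : ∃ m : ℕ, r ^ m ∉ K ∧ IsPGroup q (zpowers (r ^ m)) := by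
  have hq : q.Prime := Fact.out
  obtain ⟨k, m, hqm, hord⟩ :=
    Nat.exists_eq_pow_mul_and_not_dvd hfin.orderOf_pos.ne' q hq.ne_one
  refine ⟨m, fun hm => hr ?_, ?_⟩
  · have hgcd : (q.gcd m : ℤ) = 1 := by exact_mod_cast (hq.coprime_iff_not_dvd.2 hqm)
    rw [← zpow_one r, ← hgcd, Nat.gcd_eq_gcd_ab, zpow_add, zpow_mul, zpow_mul, zpow_natCast,
      zpow_natCast]
    exact mul_mem (zpow_mem hrq _) (zpow_mem hm _)
  · refine IsPGroup.of_card_dvd_pow (n := k) ?_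
    rw [Nat.card_zpowers]
    exact orderOf_dvd_of_pow_eq_one (by rw [← pow_mul, mul_comm, ← hord, pow_orderOf_eq_one])

theorem relIndex_dvd_of_isPGroup [Fact p.Prime] (ψ : H →* L) (hker : ψ.ker = K.subgroupOf H)
    (hL : ¬ p ^ 2 ∣ Nat.card L) (hA : IsPGroup p A) (hAH : A ≤ H) : K.relIndex A ∣ p := by
  have hfin : Finite L := Nat.finite_of_card_ne_zero fun h => hL (h ▸ dvd_zero _)
  have hcard : K.relIndex A = Nat.card (ψ.comp (inclusion hAH)).range := by
    rw [← index_ker, ← MonoidHom.comap_ker, hker]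
    rfl
  obtain ⟨k, hk⟩ := IsPGroup.iff_card.1
    (hA.of_surjective _ (ψ.comp (inclusion hAH)).rangeRestrict_surjective)
  have hk2 : k < 2 := by
    by_contra! h
    exact hL ((pow_dvd_pow p h).trans (hk ▸ card_subgroup_dvd_card _))
  rw [hcard, hk]
  exact (pow_dvd_pow p (Nat.lt_succ_iff.1 hk2)).trans (pow_one p).dvd

theorem relIndex_centralizer_conj_le [Finite V] {h : G} (hV : h ∈ normalizer (V : Set G)) (s : G) :
    (centralizer {h * s * h⁻¹}).relIndex V ≤ (centralizer {s}).relIndex V := by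
  have hmap := relIndex_map_map_of_injective (f := (MulAut.conj h).toMonoidHom) (centralizer {s}) V
    (MulAut.conj h).injective
  have hcent := map_centralizer_le_centralizer_image {s} (MulAut.conj h).toMonoidHom
  have hVmap : V.map (MulAut.conj h).toMonoidHom = V := mem_normalizer_iff_map_conj_eq.1 hV
  rw [hVmap] at hmap
  rw [Set.image_singleton] at hcent
  rw [← hmap]
  exact relIndex_le_of_le_left hcent relIndex_ne_zero_of_finite

theorem relIndex_centralizer_mul_le [Finite V] (a b : G) :
    (centralizer {a * b}).relIndex V ≤
      (centralizer {a}).relIndex V * (centralizer {b}).relIndex V := by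
  refine (relIndex_le_of_le_left (fun c hc => ?_) relIndex_ne_zero_of_finite).trans
    (relIndex_inf_le (H := centralizer {a}) (K := centralizer {b}))
  rw [mem_inf, mem_centralizer_singleton_iff, mem_centralizer_singleton_iff] at hc
  exact mem_centralizer_singleton_iff.2 (Commute.mul_right hc.1 hc.2)

theorem le_centralizer_of_relIndex_le [Fact p.Prime] [Fact q.Prime] [Finite V]
    (hpq : p ≠ q) (hp2 : ¬ p ^ 2 ≡ 1 [MOD q]) (hV : IsPGroup p V) {d : G}
    (hd : IsPGroup q (zpowers d)) (hdV : d ∈ normalizer (V : Set G))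
    (hindex : (centralizer {d}).relIndex V ≤ p ^ 2) : V ≤ centralizer {d} := by
  have hp : p.Prime := Fact.out
  have hq : q.Prime := Fact.out
  obtain ⟨k, hk⟩ := IsPGroup.iff_card.1 hV
  have hmod := relIndex_centralizer_modEq_one hd hdV
    (hk ▸ ((Nat.coprime_primes hq hp).2 hpq.symm).pow_right k)
  obtain ⟨j, -, hj⟩ := (Nat.dvd_prime_pow hp).1 (hk ▸ relIndex_dvd_card (centralizer {d}) V)
  rw [hj] at hmod hindex
  have hj2 : j ≤ 2 := (Nat.pow_le_pow_iff_right hp.one_lt).1 hindex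
  interval_cases j
  · exact relIndex_eq_one.1 hj
  · exact absurd (by simpa using hmod.pow 2) hp2
  · exact absurd hmod hp2

end CoprimeAction

section Offender

open Subgroup QuasiprimitiveAmalgam

variable {G : Type*} [Group G] {X H K : Subgroup G} {p q : ℕ}

/-- Some `s ∈ A` and its conjugate each centralise a subgroup of index at most `p` in `V`, so the
`q`-part of their product centralises one of index at most `p ^ 2`, which leaves only `V`. -/
theorem noOffender_of_exists_mul_conj_pow_mem [Fact p.Prime] [Fact q.Prime] [Finite X]
    (hpq : p ≠ q) (hp2 : ¬ p ^ 2 ≡ 1 [MOD q]) (hHX : H ≤ X)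
    (hindex : ∀ A ≤ H, IsPGroup p A → K.relIndex A ≤ p)
    (hexists : ∀ s ∈ H, s ∉ K → IsPGroup p (zpowers s) →
      ∃ h ∈ X, s * (h * s * h⁻¹) ∉ K ∧ (s * (h * s * h⁻¹)) ^ q ∈ K) :
    NoOffender p X H K := by
  intro A V hAH hA hAK hVX hV hXV hAV hle
  have hfinV : Finite V := Finite.of_injective _ (inclusion_injective hVX)
  obtain ⟨s, hsA, hsK⟩ := SetLike.not_le_iff_exists.1 hAK
  obtain ⟨h, hhX, hrK, hrq⟩ := hexists s (hAH hsA) hsK (hA.to_le (zpowers_le.2 hsA))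
  set r := s * (h * s * h⁻¹)
  have hsX : s ∈ X := hHX (hAH hsA)
  have hrX : r ∈ X := mul_mem hsX (mul_mem (mul_mem hhX hsX) (inv_mem hhX))
  have hs : (centralizer {s}).relIndex V ≤ p :=
    calc (centralizer {s}).relIndex V ≤ (centralizer (A : Set G)).relIndex V :=
          relIndex_le_of_le_left (centralizer_le (Set.singleton_subset_iff.2 hsA))
            relIndex_ne_zero_of_finite
      _ ≤ p := hAV.trans (hindex A hAH hA)
  have hrfin : IsOfFinOrder r := X.subtype.isOfFinOrder (isOfFinOrder_of_finite ⟨r, hrX⟩)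
  obtain ⟨m, hmK, hm⟩ := exists_pow_notMem_isPGroup_zpowers hrfin hrK hrq
  have hrV : (centralizer {r ^ m}).relIndex V ≤ p ^ 2 :=
    calc (centralizer {r ^ m}).relIndex V ≤ (centralizer {r}).relIndex V := by
          refine relIndex_le_of_le_left (fun c hc => ?_) relIndex_ne_zero_of_finite
          rw [mem_centralizer_singleton_iff] at hc ⊢
          exact Commute.pow_right hc m
      _ ≤ (centralizer {s}).relIndex V * (centralizer {h * s * h⁻¹}).relIndex V :=
          relIndex_centralizer_mul_le s (h * s * h⁻¹)
      _ ≤ p * p := Nat.mul_le_mul hs ((relIndex_centralizer_conj_le (hXV hhX) s).trans hs)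
      _ = p ^ 2 := (sq p).symm
  have hcent := le_centralizer_of_relIndex_le hpq hp2 hV hm (hXV (pow_mem hrX m)) hrV
  exact hmK (hle ⟨pow_mem hrX m, fun v hv => mem_centralizer_singleton_iff.1 (hcent hv)⟩)

end Offender

section SymmetricGroup

open Subgroup Equiv

theorem orderOf_eq_of_pow_prime_pow_eq_one {P : Type*} [Group P] {p k : ℕ} [Fact p.Prime] {g : P}
    (hP : ¬ p ^ 2 ∣ Nat.card P) (hg : g ≠ 1) (hgk : g ^ p ^ k = 1) : orderOf g = p := by
  obtain ⟨j, -, hj⟩ := (Nat.dvd_prime_pow Fact.out).1 (orderOf_dvd_of_pow_eq_one hgk)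
  have hj2 : j < 2 := by
    by_contra! h
    exact hP ((pow_dvd_pow p h).trans (hj ▸ orderOf_dvd_natCard g))
  interval_cases j
  · exact absurd (orderOf_eq_one_iff.1 hj) hg
  · rwa [pow_one] at hj

variable {α : Type*} [Fintype α] [DecidableEq α]

theorem isThreeCycle_of_orderOf_eq_three {σ : Perm α} (hα : Nat.card α < 6)
    (hσ : orderOf σ = 3) : σ.IsThreeCycle := by
  have hcycle : σ.IsCycle := Perm.isCycle_of_prime_order' (hσ ▸ Nat.prime_three)
    (by rwa [hσ, ← Nat.card_eq_fintype_card])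
  rw [← card_support_eq_three_iff, ← hcycle.orderOf, hσ]

set_option maxRecDepth 100000 in
theorem exists_mul_conj_pow_five_eq_one {σ : Perm (Fin 5)} (hσ : σ.IsThreeCycle) :
    ∃ τ : Perm (Fin 5), σ * (τ * σ * τ⁻¹) ≠ 1 ∧ (σ * (τ * σ * τ⁻¹)) ^ 5 = 1 := by
  have hc : (swap 0 1 * swap 1 2 : Perm (Fin 5)).IsThreeCycle := by
    rw [← card_support_eq_three_iff]
    decide
  obtain ⟨τ, hne, hpow⟩ : ∃ τ : Perm (Fin 5),
      (swap 0 1 * swap 1 2) * (τ * (swap 0 1 * swap 1 2) * τ⁻¹) ≠ 1 ∧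
      ((swap 0 1 * swap 1 2) * (τ * (swap 0 1 * swap 1 2) * τ⁻¹)) ^ 5 = 1 :=
    ⟨swap 0 3 * swap 1 4, by decide, Equiv.ext (by decide)⟩
  obtain ⟨u, rfl⟩ := isConj_iff.1 (Perm.isConj_iff_cycleType_eq.2 (hc.trans hσ.symm))
  set c : Perm (Fin 5) := swap 0 1 * swap 1 2
  have hconj : u * c * u⁻¹ * ((u * τ * u⁻¹) * (u * c * u⁻¹) * (u * τ * u⁻¹)⁻¹) =
      u * (c * (τ * c * τ⁻¹)) * u⁻¹ := by group
  refine ⟨u * τ * u⁻¹, ?_, ?_⟩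
  · rwa [hconj, Ne, conj_eq_one_iff]
  · rw [hconj, conj_pow, hpow, mul_one, mul_inv_cancel]

theorem exists_mem_alternatingGroup_apply_eq (hα : 4 ≤ Nat.card α) {a b : α} (hab : a ≠ b)
    (σ : Perm α) : ∃ τ ∈ alternatingGroup α, τ a = σ a ∧ τ b = σ b := by
  have := alternatingGroup.isMultiplyPretransitive α
  have htwo : IsMultiplyPretransitive (alternatingGroup α) α 2 :=
    isMultiplyPretransitive_of_le (n := Nat.card α - 2) (by omega) (Nat.sub_le _ _)
  obtain ⟨τ, ha, hb⟩ := is_two_pretransitive_iff.1 htwo hab (σ.injective.ne hab)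
  exact ⟨τ, τ.2, ha, hb⟩

theorem mem_range_ofSubtype_compl_pair_iff {a b : α} {σ : Perm α} :
    σ ∈ (Perm.ofSubtype : Perm {i // i ∈ ({a, b} : Finset α)ᶜ} →* Perm α).range ↔
      σ a = a ∧ σ b = b := by
  rw [Perm.mem_range_ofSubtype_iff]
  constructor
  · intro h
    have hfix : ∀ i ∈ ({a, b} : Finset α), σ i = i := fun i hi => by
      by_contra hne
      exact Finset.mem_compl.1 (h (Perm.mem_support.2 hne)) hi
    exact ⟨hfix a (by simp), hfix b (by simp)⟩
  · rintro ⟨ha, hb⟩ i hi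
    refine Finset.mem_compl.2 fun hmem => Perm.mem_support.1 hi ?_
    rcases Finset.mem_insert.1 hmem with rfl | hi
    · exact ha
    · rwa [Finset.mem_singleton.1 hi]

end SymmetricGroup

section PairStabilizer

open Subgroup Equiv

variable {G : Type*} [Group G] {X H K : Subgroup G}

theorem exists_hom_of_comap_range {P Q : Type*} [Group P] [Group Q] {φ : X →* Q}
    (hφ : Function.Surjective φ) {ι : P →* Q} (hι : Function.Injective ι) (hHX : H ≤ X)
    (hH : ∀ g : X, (g : G) ∈ H ↔ φ g ∈ ι.range) (hK : φ.ker = K.subgroupOf X) :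
    ∃ ψ : H →* P, Function.Surjective ψ ∧ ψ.ker = K.subgroupOf H := by
  have hrange : ∀ g : H, φ (inclusion hHX g) ∈ ι.range := fun g => (hH _).1 g.2
  let ψ : H →* P := (MonoidHom.ofInjective hι).symm.toMonoidHom.comp
    ((φ.comp (inclusion hHX)).codRestrict ι.range hrange)
  have hψ : ∀ g, ι (ψ g) = φ (inclusion hHX g) := fun g =>
    congrArg Subtype.val ((MonoidHom.ofInjective hι).apply_symm_apply ⟨_, hrange g⟩)
  refine ⟨ψ, fun t => ?_, ?_⟩
  · obtain ⟨g, hg⟩ := hφ (ι t)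
    have hgH : (g : G) ∈ H := (hH g).2 (hg ▸ ⟨t, rfl⟩)
    exact ⟨⟨g, hgH⟩, hι ((hψ _).trans hg)⟩
  · ext g
    rw [MonoidHom.mem_ker, ← map_eq_one_iff ι hι, hψ, ← MonoidHom.mem_ker, hK]
    rfl

variable {α : Type*} [Fintype α] [DecidableEq α] {φ : X →* Perm α} {a b : α}

theorem exists_hom_perm_compl_pair (hφ : Function.Surjective φ) (hHX : H ≤ X)
    (hH : ∀ g : X, (g : G) ∈ H ↔ φ g a = a ∧ φ g b = b) (hK : φ.ker = K.subgroupOf X) :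
    ∃ ψ : H →* Perm {i // i ∈ ({a, b} : Finset α)ᶜ},
      Function.Surjective ψ ∧ ψ.ker = K.subgroupOf H :=
  exists_hom_of_comap_range hφ Perm.ofSubtype_injective hHX
    (fun g => (hH g).trans mem_range_ofSubtype_compl_pair_iff.symm) hK

theorem card_compl_pair (hab : a ≠ b) :
    Nat.card {i // i ∈ ({a, b} : Finset α)ᶜ} = Nat.card α - 2 := by
  rw [Nat.card_eq_fintype_card, Fintype.card_coe, Finset.card_compl, Finset.card_pair hab,
    Nat.card_eq_fintype_card]

theorem alternatingGroup_le_map_subgroupOf (hα : 5 ≤ Nat.card α) (hφ : Function.Surjective φ)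
    (hK : φ.ker = K.subgroupOf X) {D : Subgroup G} (hDX : D ≤ X)
    (hD : X ≤ normalizer (D : Set G)) (hDK : ¬ D ≤ K) :
    alternatingGroup α ≤ (D.subgroupOf X).map φ := by
  have hnormal : ((D.subgroupOf X).map φ).Normal :=
    ((normal_subgroupOf_iff_le_normalizer hDX).2 hD).map φ hφ
  refine Perm.alternatingGroup_le_of_normal hα ((nontrivial_iff_ne_bot _).2 fun hbot => hDK ?_)
  rw [Subgroup.map_eq_bot_iff, hK] at hbot
  exact fun d hd => hbot (show ⟨d, hDX hd⟩ ∈ D.subgroupOf X from hd)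

theorem le_sup_of_alternatingGroup_le_map (hα : 4 ≤ Nat.card α) (hab : a ≠ b)
    (hH : ∀ g : X, (g : G) ∈ H ↔ φ g a = a ∧ φ g b = b) {D : Subgroup G}
    (hD : alternatingGroup α ≤ (D.subgroupOf X).map φ) : X ≤ D ⊔ H := by
  intro g hg
  obtain ⟨τ, hτ, ha, hb⟩ := exists_mem_alternatingGroup_apply_eq hα hab (φ ⟨g, hg⟩)
  obtain ⟨d, hd, rfl⟩ := hD hτ
  have hdg : ((d⁻¹ * ⟨g, hg⟩ : X) : G) ∈ H := by
    rw [hH, map_mul, map_inv, Perm.mul_apply, Perm.mul_apply, ← ha, ← hb]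
    exact ⟨(φ d).symm_apply_apply a, (φ d).symm_apply_apply b⟩
  rw [← mul_inv_cancel_left (d : G) g]
  exact mul_mem (mem_sup_left hd) (mem_sup_right hdg)

end PairStabilizer

section LocallySymmetric

open Subgroup Equiv

variable {G : Type*} [Group G] {X H K : Subgroup G} {f : G} {β : Type*} [Finite β]

theorem edgeKernel_eq_bot_of_five_le_card (S : QuasiprimitiveAmalgam X H K f) [Finite H]
    {ψ : H →* Perm β} (hψ : Function.Surjective ψ) (hker : ψ.ker = K.subgroupOf H)
    (hβ : 5 ≤ Nat.card β) : QuasiprimitiveAmalgam.edgeKernel K f = ⊥ := by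
  classical
  have := Fintype.ofFinite β
  have := isSimpleGroup_alternatingGroup (Or.inr hβ)
  refine S.edgeKernel_eq_bot_of_not_le_centralizer fun T hT hTK hcomm => ?_
  obtain ⟨e⟩ := hT.nonempty_mulEquiv (centralizer_alternatingGroup_le (by omega)) hψ hker hTK
  have hmul : ∀ s t : T, s * t = t * s := fun s t =>
    Subtype.ext (mem_centralizer_iff.1 (hcomm t.2) s s.2)
  have halt : IsMulCommutative (alternatingGroup β) :=
    ⟨⟨e.surjective.forall₂.2 fun s t => by rw [← map_mul, hmul, map_mul]⟩⟩
  have := alternatingGroup.isMulCommutative_iff_card_le_three.1 halt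
  omega

theorem exists_mul_conj_pow_five_mem {φ : X →* Perm (Fin 5)} (hφ : Function.Surjective φ)
    (hK : φ.ker = K.subgroupOf X) {s : G} {k : ℕ} (hs : s ∈ X) (hsK : s ∉ K)
    (hsk : s ^ 3 ^ k = 1) : ∃ h ∈ X, s * (h * s * h⁻¹) ∉ K ∧ (s * (h * s * h⁻¹)) ^ 5 ∈ K := by
  have : Fact (Nat.Prime 3) := ⟨Nat.prime_three⟩
  lift s to X using hs
  have hmem : ∀ g : X, (g : G) ∈ K ↔ φ g = 1 := fun g => by
    rw [← MonoidHom.mem_ker, hK, mem_subgroupOf]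
  have hφs : φ s ^ 3 ^ k = 1 := by
    rw [← map_pow, show s ^ 3 ^ k = 1 from Subtype.ext hsk, map_one]
  have hcard : ¬ 3 ^ 2 ∣ Nat.card (Perm (Fin 5)) := by
    rw [Nat.card_perm, Nat.card_fin]
    decide
  obtain ⟨τ, hne, hpow⟩ := exists_mul_conj_pow_five_eq_one <| isThreeCycle_of_orderOf_eq_three
    (by simp) (orderOf_eq_of_pow_prime_pow_eq_one hcard (mt (hmem s).2 hsK) hφs)
  obtain ⟨h, rfl⟩ := hφ τ
  simp only [← map_inv, ← map_mul, ← map_pow] at hne hpow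
  exact ⟨h, h.2, mt (hmem (s * (h * s * h⁻¹))).1 hne, (hmem _).2 hpow⟩

theorem edgeKernel_eq_bot_of_card_eq_three (S : QuasiprimitiveAmalgam X H K f) [Finite X]
    {φ : X →* Perm (Fin 5)} (hφ : Function.Surjective φ) (hK : φ.ker = K.subgroupOf X)
    {ψ : H →* Perm β} (hψ : Function.Surjective ψ) (hker : ψ.ker = K.subgroupOf H)
    (hβ : Nat.card β = 3) : QuasiprimitiveAmalgam.edgeKernel K f = ⊥ := by
  have : Finite H := Finite.of_injective _ (inclusion_injective S.arc_le)
  have : Fact (Nat.Prime 3) := ⟨Nat.prime_three⟩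
  have : Fact (Nat.Prime 5) := ⟨Nat.prime_five⟩
  classical
  have := Fintype.ofFinite β
  have := isSimpleGroup_alternatingGroup (Or.inl hβ)
  refine S.edgeKernel_eq_bot_of_isPGroup (p := 3) (fun T hT hTK => ?_) ?_
  · obtain ⟨e⟩ := hT.nonempty_mulEquiv (centralizer_alternatingGroup_le hβ.ge) hψ hker hTK
    have : Nontrivial β := Finite.one_lt_card_iff_nontrivial.1 (by omega)
    exact (IsPGroup.of_card (n := 1) (by rw [nat_card_alternatingGroup, hβ]; rfl)).of_equiv e.symm
  · refine noOffender_of_exists_mul_conj_pow_mem (q := 5) (by decide) (by decide) S.arc_le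
      (fun A hAH hA => Nat.le_of_dvd (by decide) (relIndex_dvd_of_isPGroup ψ hker ?_ hA hAH)) ?_
    · rw [Nat.card_perm, hβ]
      decide
    · intro s hs hsK hsp
      obtain ⟨k, hk⟩ := hsp ⟨s, mem_zpowers s⟩
      exact exists_mul_conj_pow_five_mem hφ hK (S.arc_le hs) hsK (congrArg Subtype.val hk)

end LocallySymmetric

section BallStabiliser

open Subgroup

variable {V : Type*} {Γ : SimpleGraph V} {G : Subgroup (Equiv.Perm V)} {x y : V} {i j : ℕ}

theorem mem_ballStab_iff {g : G} : g ∈ ballStab Γ G x i ↔ ∀ v, Γ.dist x v ≤ i → g • v = v := by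
  simp only [ballStab, mem_iInf, mem_stabilizer_iff]

theorem ballStab_le_stabilizer (h : Γ.dist x y ≤ i) : ballStab Γ G x i ≤ stabilizer G y :=
  fun _ hg => mem_ballStab_iff.1 hg y h

theorem ballStab_le_ballStab (hconn : Γ.Connected) (h : Γ.dist x y + i ≤ j) :
    ballStab Γ G x j ≤ ballStab Γ G y i := fun _ hg => mem_ballStab_iff.2 fun v hv =>
  mem_ballStab_iff.1 hg v ((hconn.dist_triangle (v := y)).trans (by omega))

theorem mem_ballStab_one_iff (hconn : Γ.Connected) {g : G} :
    g ∈ ballStab Γ G x 1 ↔ g • x = x ∧ ∀ v, Γ.Adj x v → g • v = v := by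
  rw [mem_ballStab_iff]
  constructor
  · intro h
    exact ⟨h x (by simp), fun v hv => h v (SimpleGraph.dist_eq_one_iff_adj.2 hv).le⟩
  · rintro ⟨hx, h⟩ v hv
    rcases Nat.le_one_iff_eq_zero_or_eq_one.1 hv with h0 | h1
    · rwa [← hconn.dist_eq_zero_iff.1 h0]
    · exact h v (SimpleGraph.dist_eq_one_iff_adj.1 h1)

theorem PreservesAdj.adj_smul_iff (hG : PreservesAdj Γ G) (g : G) {u v : V} :
    Γ.Adj (g • u) (g • v) ↔ Γ.Adj u v :=
  (hG g g.2 u v).symm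

theorem PreservesAdj.dist_smul (hG : PreservesAdj Γ G) (hconn : Γ.Connected) (g : G) (u v : V) :
    Γ.dist (g • u) (g • v) = Γ.dist u v := by
  have hle : ∀ (g : G) (u v : V), Γ.dist (g • u) (g • v) ≤ Γ.dist u v := fun g u v => by
    let T : Γ →g Γ := ⟨fun w => g • w, (hG.adj_smul_iff g).2⟩
    obtain ⟨w, hw⟩ := hconn.exists_walk_length_eq_dist u v
    exact (SimpleGraph.dist_le (w.map T)).trans (by rw [SimpleGraph.Walk.length_map, hw])
  refine (hle g u v).antisymm ?_
  simpa only [inv_smul_smul] using hle g⁻¹ (g • u) (g • v)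

theorem PreservesAdj.conj_smul_ballStab (hG : PreservesAdj Γ G) (hconn : Γ.Connected) (g : G) :
    MulAut.conj g • ballStab Γ G x i = ballStab Γ G (g • x) i := by
  ext h
  rw [mem_pointwise_smul_iff_inv_smul_mem, ← map_inv, MulAut.smul_def, MulAut.conj_apply,
    inv_inv, mem_ballStab_iff, mem_ballStab_iff]
  simp only [mul_smul, inv_smul_eq_iff]
  refine ⟨fun hfix v hv => ?_, fun hfix v hv => hfix _ (by rwa [hG.dist_smul hconn])⟩
  have hv' := hfix (g⁻¹ • v) (by rwa [← hG.dist_smul hconn g, smul_inv_smul])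
  rwa [smul_inv_smul] at hv'

end BallStabiliser

section ArcTransitive

open Subgroup

variable {V : Type*} {Γ : SimpleGraph V} {G : Subgroup (Equiv.Perm V)} {x y : V} {f : G}

theorem exists_smul_eq_and_smul_eq [IsPretransitive G V] (hG : PreservesAdj Γ G)
    (hxy : Γ.Adj x y) (hlocal : ∀ v, Γ.Adj x v → ∃ g ∈ stabilizer G x, g • y = v) :
    ∃ f : G, f • x = y ∧ f • y = x := by
  obtain ⟨g, rfl⟩ := exists_smul_eq G x y
  obtain ⟨k, hkx, hky⟩ := hlocal (g⁻¹ • x) (by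
    rw [← hG.adj_smul_iff g, smul_inv_smul]
    exact hxy.symm)
  exact ⟨g * k, by rw [mul_smul, hkx], by rw [mul_smul, hky, smul_inv_smul]⟩

theorem mem_normalizer_stabilizer_inf_stabilizer (hfx : f • x = y) (hfy : f • y = x) :
    f ∈ normalizer ((stabilizer G x ⊓ stabilizer G y : Subgroup G) : Set G) := by
  have hsmul : ∀ v : V, MulAut.conj f • stabilizer G v = stabilizer G (f • v) := fun v =>
    (stabilizer_smul_eq_stabilizer_map_conj f v).symm
  rw [← conj_smul_eq_iff_mem_normalizer, smul_inf, hsmul, hsmul, hfx, hfy, inf_comm]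

theorem exists_mem_smul_eq_of_connected (hG : PreservesAdj Γ G) (hconn : Γ.Connected)
    (hlocal : ∀ v, Γ.Adj x v → ∃ g ∈ stabilizer G x, g • y = v) (hfx : f • x = y)
    {N : Subgroup G} (hN : stabilizer G x ≤ N) (hfN : f ∈ N) (v : V) : ∃ g ∈ N, g • x = v := by
  obtain ⟨w⟩ := hconn.preconnected v x
  induction w with
  | nil => exact ⟨1, one_mem _, one_smul _ _⟩
  | @cons v u _ hvu _ ih =>
    obtain ⟨g, hg, rfl⟩ := ih hlocal hfx hN
    obtain ⟨k, hkx, hky⟩ := hlocal (g⁻¹ • v) (by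
      rw [← hG.adj_smul_iff g, smul_inv_smul]
      exact hvu.symm)
    refine ⟨g * k * f, mul_mem (mul_mem hg (hN hkx)) hfN, ?_⟩
    rw [mul_smul, mul_smul, hfx, hky, smul_inv_smul]

theorem eq_bot_of_forall_exists_mem_normalizer_smul_eq {M : Subgroup G} (hM : M ≤ stabilizer G x)
    (htrans : ∀ v, ∃ g ∈ normalizer (M : Set G), g • x = v) : M = ⊥ := by
  refine (Subgroup.eq_bot_iff_forall M).2 fun m hm => Subtype.ext (Equiv.ext fun v => ?_)
  obtain ⟨g, hg, rfl⟩ := htrans v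
  have hfix : (g⁻¹ * m * g) • x = x := hM ((mem_normalizer_iff''.1 hg m).1 hm)
  rwa [mul_smul, mul_smul, inv_smul_eq_iff] at hfix

end ArcTransitive

section LocalAction

open Subgroup Equiv

variable {V : Type*} {Γ : SimpleGraph V} {G : Subgroup (Equiv.Perm V)} {x y : V} {n : ℕ}
  {e : Γ.neighborSet x ≃ OPairs n} {φ : stabilizer G x →* Perm (Fin n)}

theorem smul_coe_symm_opairs
    (he : ∀ (g : stabilizer G x) (v : Γ.neighborSet x), (e.symm (φ g • e v) : V) = g • (v : V))
    (g : stabilizer G x) (p : OPairs n) : g • (e.symm p : V) = e.symm (φ g • p) := by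
  rw [← he, e.apply_symm_apply]

theorem smul_coe_symm_opairs_eq_iff
    (he : ∀ (g : stabilizer G x) (v : Γ.neighborSet x), (e.symm (φ g • e v) : V) = g • (v : V))
    (g : stabilizer G x) (p q : OPairs n) :
    g • (e.symm p : V) = e.symm q ↔ φ g p.1.1 = q.1.1 ∧ φ g p.1.2 = q.1.2 := by
  rw [smul_coe_symm_opairs he, Subtype.coe_inj, e.symm.injective.eq_iff, Subtype.ext_iff,
    Prod.ext_iff]
  rfl

theorem exists_smul_eq_of_adj (hφ : Function.Surjective φ)
    (he : ∀ (g : stabilizer G x) (v : Γ.neighborSet x), (e.symm (φ g • e v) : V) = g • (v : V))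
    (hy : Γ.Adj x y) (v : V) (hv : Γ.Adj x v) : ∃ g ∈ stabilizer G x, g • y = v := by
  obtain ⟨p, hp⟩ := e.symm.surjective ⟨y, hy⟩
  obtain ⟨q, hq⟩ := e.symm.surjective ⟨v, hv⟩
  obtain ⟨σ, h1, h2⟩ := is_two_pretransitive_iff.1
    (Perm.isMultiplyPretransitive (Fin n) 2) p.2 q.2
  obtain ⟨g, rfl⟩ := hφ σ
  have hg := (smul_coe_symm_opairs_eq_iff he g p q).2 ⟨h1, h2⟩
  rw [hp, hq] at hg
  exact ⟨g, g.2, hg⟩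

theorem ker_eq_ballStab_one_subgroupOf (hn : 2 ≤ n) (hconn : Γ.Connected)
    (he : ∀ (g : stabilizer G x) (v : Γ.neighborSet x), (e.symm (φ g • e v) : V) = g • (v : V)) :
    φ.ker = (ballStab Γ G x 1).subgroupOf (stabilizer G x) := by
  have : Nontrivial (Fin n) := Fin.nontrivial_iff_two_le.2 hn
  ext g
  rw [MonoidHom.mem_ker, mem_subgroupOf, mem_ballStab_one_iff hconn]
  constructor
  · refine fun hg => ⟨g.2, fun v hv => ?_⟩
    have hgv := he g ⟨v, hv⟩
    rw [hg, one_smul, e.symm_apply_apply] at hgv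
    exact hgv.symm
  · rintro ⟨-, hfix⟩
    ext1 i
    obtain ⟨j, hij⟩ := exists_ne i
    let p : OPairs n := ⟨(i, j), hij.symm⟩
    exact ((smul_coe_symm_opairs_eq_iff he g p p).1 (hfix _ (e.symm p).2)).1

end LocalAction

section EdgeKernel

open Subgroup Equiv

variable {V : Type*} {Γ : SimpleGraph V} {G : Subgroup (Equiv.Perm V)} {x y : V} {n : ℕ}
  {e : Γ.neighborSet x ≃ OPairs n} {φ : stabilizer G x →* Perm (Fin n)}

theorem mem_stabilizer_inf_stabilizer_iff {p : OPairs n} (hp : e.symm p = y)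
    (he : ∀ (g : stabilizer G x) (v : Γ.neighborSet x), (e.symm (φ g • e v) : V) = g • (v : V))
    (g : stabilizer G x) :
    (g : G) ∈ stabilizer G x ⊓ stabilizer G y ↔ φ g p.1.1 = p.1.1 ∧ φ g p.1.2 = p.1.2 := by
  rw [← smul_coe_symm_opairs_eq_iff he, hp]
  exact and_iff_right g.2

theorem quasiprimitiveAmalgam_stabilizer {f : G} {p : OPairs n} (hn : 5 ≤ n)
    (hG : PreservesAdj Γ G) (hconn : Γ.Connected) (hp : e.symm p = y)
    (hφ : Function.Surjective φ)
    (he : ∀ (g : stabilizer G x) (v : Γ.neighborSet x), (e.symm (φ g • e v) : V) = g • (v : V))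
    (hfx : f • x = y) (hfy : f • y = x) :
    QuasiprimitiveAmalgam (stabilizer G x) (stabilizer G x ⊓ stabilizer G y) (ballStab Γ G x 1)
      f where
  kernel_le := le_inf (ballStab_le_stabilizer (by simp)) (ballStab_le_stabilizer
    (SimpleGraph.dist_eq_one_iff_adj.2 (hp ▸ (e.symm p).2)).le)
  arc_le := inf_le_left
  le_normalizer_kernel g hg := conj_smul_eq_iff_mem_normalizer.1 <| by
    rw [hG.conj_smul_ballStab hconn, hg]
  mem_normalizer_arc := mem_normalizer_stabilizer_inf_stabilizer hfx hfy
  mul_self_mem := mem_inf.2 ⟨mem_stabilizer_iff.2 (by rw [mul_smul, hfx, hfy]),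
    mem_stabilizer_iff.2 (by rw [mul_smul, hfy, hfx])⟩
  eq_bot_of_le_normalizer M hM hXM hfM :=
    eq_bot_of_forall_exists_mem_normalizer_smul_eq (hM.trans inf_le_left)
      (exists_mem_smul_eq_of_connected hG hconn
        (exists_smul_eq_of_adj hφ he (hp ▸ (e.symm p).2)) hfx hXM hfM)
  le_sup_of_not_le D hDX hD hDK :=
    le_sup_of_alternatingGroup_le_map (by rw [Nat.card_fin]; omega) p.2
      (mem_stabilizer_inf_stabilizer_iff hp he)
      (alternatingGroup_le_map_subgroupOf (by rwa [Nat.card_fin]) hφ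
        (ker_eq_ballStab_one_subgroupOf (by omega) hconn he) hDX hD hDK)

theorem IsLocallyOPairs.ballStab_one_inf_ballStab_one_eq_bot (hn : n = 5 ∨ 7 ≤ n)
    (hconn : Γ.Connected) (hloc : IsLocallyOPairs n Γ G) (hxy : Γ.Adj x y)
    [Finite (stabilizer G x)] : ballStab Γ G x 1 ⊓ ballStab Γ G y 1 = ⊥ := by
  obtain ⟨hG, htrans, hlocal⟩ := hloc
  obtain ⟨e, φ, hφ, he⟩ := hlocal x
  obtain ⟨f, hfx, hfy⟩ := exists_smul_eq_and_smul_eq hG hxy (exists_smul_eq_of_adj hφ he hxy)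
  obtain ⟨p, hp⟩ := e.symm.surjective ⟨y, hxy⟩
  have hpy : (e.symm p : V) = y := congrArg Subtype.val hp
  have S := quasiprimitiveAmalgam_stabilizer (by omega) hG hconn hpy hφ he hfx hfy
  have hK := ker_eq_ballStab_one_subgroupOf (by omega) hconn he
  obtain ⟨ψ, hψ, hker⟩ :=
    exists_hom_perm_compl_pair hφ S.arc_le (mem_stabilizer_inf_stabilizer_iff hpy he) hK
  have hcard := card_compl_pair p.2
  rw [Nat.card_fin] at hcard
  rw [← hfx, ← hG.conj_smul_ballStab hconn f]
  rcases hn with rfl | hn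
  · exact edgeKernel_eq_bot_of_card_eq_three S hφ hK hψ hker hcard
  · have : Finite (stabilizer G x ⊓ stabilizer G y : Subgroup G) :=
      Finite.of_injective _ (inclusion_injective S.arc_le)
    exact edgeKernel_eq_bot_of_five_le_card S hψ hker (by omega)

theorem IsLocallyOPairs.exists_adj (hn : 2 ≤ n) (hloc : IsLocallyOPairs n Γ G) (x : V) :
    ∃ y, Γ.Adj x y := by
  have : Nontrivial (Fin n) := Fin.nontrivial_iff_two_le.2 hn
  obtain ⟨a, b, hab⟩ := exists_pair_ne (Fin n)
  obtain ⟨e, -⟩ := hloc.2.2 x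
  exact ⟨_, (e.symm ⟨(a, b), hab⟩).2⟩

end EdgeKernel

theorem stmt_1_general {V : Type*} (n : ℕ) (hn : n = 5 ∨ 7 ≤ n) (Γ : SimpleGraph V)
    (hconn : Γ.Connected) (G : Subgroup (Equiv.Perm V)) (hloc : IsLocallyOPairs n Γ G) (x : V)
    [Finite (stabilizer G x)] : ballStab Γ G x 2 = ⊥ := by
  obtain ⟨y, hxy⟩ := hloc.exists_adj (by omega) x
  have hdist : Γ.dist x y = 1 := SimpleGraph.dist_eq_one_iff_adj.2 hxy
  refine eq_bot_iff.2 (le_trans (le_inf ?_ ?_)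
    (hloc.ballStab_one_inf_ballStab_one_eq_bot hn hconn hxy).le)
  · exact ballStab_le_ballStab hconn (by simp)
  · exact ballStab_le_ballStab hconn (by omega)

/-- For `n = 5` or `n ≥ 7`, `L ≅ Sym(n)` acting on ordered pairs of distinct
elements of `{1,…,n}`, and any locally `L` pair `(Γ,G)`, the pointwise stabiliser of the
ball of radius two around any vertex is trivial. -/
theorem stmt_1 {V : Type*} [Fintype V] (n : ℕ) (hn : n = 5 ∨ 7 ≤ n)
    (Γ : SimpleGraph V) (hconn : Γ.Connected)
    (G : Subgroup (Equiv.Perm V)) (hloc : IsLocallyOPairs n Γ G) (x : V) :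
    ballStab Γ G x 2 = ⊥ :=
  stmt_1_general n hn Γ hconn G hloc x
end

section
/- Let n ≥ 4, let Sym(n) act on the set Ω of ordered pairs of distinct elements of {1,…,n}, let ω = (a,b) ∈ Ω, let L_ω be the stabiliser of ω, and let T_1, T_2 be the stabilisers in Sym(n) of the points a and b respectively. If p is a prime such that L_ω has a nontrivial normal p-subgroup, then n ∈ {4,5,6}, L_ω contains a Sylow p-subgroup of T_i for i = 1,2, and the subgroup ⟨O^p(T_1), O^p(T_2)⟩ is transitive on Ω. -/
open MulAction Pointwise

/-- `O^p(H)`: the smallest normal subgroup of the finite group `H` whose quotient is a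
`p`-group (for finite `H`, the quotient by a normal subgroup `N` is a `p`-group iff the
index of `N` is a power of `p`). -/
def pResidual (p : ℕ) (H : Type*) [Group H] : Subgroup H :=
  ⨅ N ∈ {N : Subgroup H | N.Normal ∧ ∃ k : ℕ, N.index = p ^ k}, N

/-!
The stabilizer `L_ω` of `ω = (a, b)` is the symmetric group on the `n - 2` points other than `a`
and `b`. A nontrivial normal `p`-subgroup of it is transitive on these points, by primitivity, so
`p` divides `n - 2`; being nilpotent, it also rules out `n - 2 ≥ 5`, where every nontrivial normal
subgroup contains the nonsolvable alternating group.

Hence `p` does not divide `n - 1`, which is both the index of `L_ω` in `T₁` and the number of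
points on which `T₁` acts transitively. So `L_ω` contains a Sylow `p`-subgroup of `T₁`, and
`O^p(T₁)`, whose index is a power of `p`, stays transitive on the points other than `a`; likewise
for `T₂` and `b`. A third point is carried to any point other than `a` by `O^p(T₁)` and to `a` by
`O^p(T₂)`, so the two residuals together are transitive; as `O^p(T₁)` fixes `a` and is transitive
on the other points, they generate a 2-transitive group.
-/

section IndexPow

variable {p : ℕ} {G : Type*} [Group G]

theorem infClosed_normal_index_eq_pow [Fact p.Prime] :
    InfClosed {N : Subgroup G | N.Normal ∧ ∃ k : ℕ, N.index = p ^ k} := by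
  rintro M ⟨hM, i, hi⟩ N ⟨hN, j, hj⟩
  obtain ⟨l, -, hl⟩ := (Nat.dvd_prime_pow Fact.out).1 (hi ▸ M.relIndex_dvd_index_of_normal N)
  refine ⟨inferInstance, l + j, ?_⟩
  rw [← Subgroup.relIndex_mul_index inf_le_right, Subgroup.inf_relIndex_right, hl, hj, pow_add]

theorem exists_index_pResidual_eq_pow [Fact p.Prime] [Finite G] :
    ∃ k : ℕ, (pResidual p G).index = p ^ k := by
  have hne : {N : Subgroup G | N.Normal ∧ ∃ k : ℕ, N.index = p ^ k}.Nonempty :=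
    ⟨⊤, inferInstance, 0, Subgroup.index_top⟩
  rw [pResidual, ← sInf_eq_iInf]
  exact (infClosed_normal_index_eq_pow.sInf_mem_of_nonempty (Set.toFinite _) hne subset_rfl).2

theorem exists_sylow_le_of_not_dvd_index [Fact p.Prime] [Finite G] {H : Subgroup G}
    (hH : ¬ p ∣ H.index) : ∃ S : Sylow p G, (S : Subgroup G) ≤ H := by
  obtain ⟨Q⟩ : Nonempty (Sylow p H) := inferInstance
  have hQ : ¬ p ∣ ((Q : Subgroup H).map H.subtype).index := by
    rw [Subgroup.index_map_subtype]
    exact (Fact.out : p.Prime).not_dvd_mul Q.not_dvd_index hH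
  exact ⟨(Q.isPGroup'.map H.subtype).toSylow hQ, Subgroup.map_subtype_le _⟩

end IndexPow

section Transitivity

variable {p : ℕ} {G X : Type*} [Group G] [MulAction G X] {a b : X}

theorem isPretransitive_of_coprime_index [IsPretransitive G X] [Finite X] {H : Subgroup G}
    (hH : (Nat.card X).Coprime H.index) : IsPretransitive H X := by
  refine ⟨fun x y ↦ ?_⟩
  have : Nonempty X := ⟨x⟩
  have hx : (stabilizer G x).index = Nat.card X := index_stabilizer_of_transitive G x
  have horbit : (stabilizer G x).relIndex H = (orbit H x).ncard := index_stabilizer H x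
  -- both sides are the index in `G` of the stabilizer of `x` in `H`
  have hprod : H.relIndex (stabilizer G x) * Nat.card X = (orbit H x).ncard * H.index := by
    rw [← hx, ← horbit, ← Subgroup.inf_relIndex_right H, Subgroup.relIndex_mul_index inf_le_right,
      ← Subgroup.inf_relIndex_right _ H, Subgroup.relIndex_mul_index inf_le_right, inf_comm]
  have hdvd : Nat.card X ∣ (orbit H x).ncard := hH.dvd_of_dvd_mul_right (Dvd.intro_left _ hprod)
  have hpos : 0 < (orbit H x).ncard := (nonempty_orbit x).ncard_pos
  have horbit_univ : orbit H x = Set.univ :=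
    (Set.eq_univ_iff_ncard _).2 ((Set.ncard_le_card _).antisymm (Nat.le_of_dvd hpos hdvd))
  exact mem_orbit_iff.1 (horbit_univ ▸ Set.mem_univ y)

theorem isPretransitive_pResidual [IsPretransitive G X] [Finite G] [Finite X] [Fact p.Prime]
    (hX : ¬ p ∣ Nat.card X) : IsPretransitive (pResidual p G) X := by
  obtain ⟨k, hk⟩ := exists_index_pResidual_eq_pow (p := p) (G := G)
  exact isPretransitive_of_coprime_index (hk ▸ (Fact.out : p.Prime).coprime_pow_of_not_dvd hX)

theorem isPretransitive_ofStabilizer [IsMultiplyPretransitive G X 2] (a : X) :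
    IsPretransitive (stabilizer G a) (SubMulAction.ofStabilizer G a) := by
  have : IsPretransitive G X := isPretransitive_of_is_two_pretransitive
  exact is_one_pretransitive_iff.1 (SubMulAction.ofStabilizer.isMultiplyPretransitive.1 ‹_›)

theorem exists_sylow_stabilizer_le_fixingSubgroup_pair [Finite G] [Finite X] [Fact p.Prime]
    [IsPretransitive (stabilizer G a) (SubMulAction.ofStabilizer G a)]
    (hab : a ≠ b) (hX : ¬ p ∣ Nat.card X - 1) :
    ∃ S : Sylow p (stabilizer G a),
      (S : Subgroup (stabilizer G a)).map (stabilizer G a).subtype ≤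
        fixingSubgroup G {a, b} := by
  let b' : SubMulAction.ofStabilizer G a := ⟨b, hab.symm⟩
  have hindex : (stabilizer (stabilizer G a) b').index = Nat.card X - 1 := by
    rw [index_stabilizer_of_transitive, SubMulAction.nat_card_ofStabilizer_eq]
  obtain ⟨S, hS⟩ := exists_sylow_le_of_not_dvd_index (hindex ▸ hX)
  refine ⟨S, ?_⟩
  rintro _ ⟨g, hg, rfl⟩
  have hgb : (g : G) • b = b := congrArg Subtype.val (hS hg)
  rw [mem_fixingSubgroup_iff]
  rintro x (rfl | rfl)
  exacts [g.2, hgb]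

theorem isMultiplyPretransitive_two_map_subtype_sup
    {A : Subgroup (stabilizer G a)} {B : Subgroup (stabilizer G b)}
    [IsPretransitive A (SubMulAction.ofStabilizer G a)]
    [IsPretransitive B (SubMulAction.ofStabilizer G b)]
    (hab : a ≠ b) (hX : ∃ c : X, c ≠ a ∧ c ≠ b) :
    IsMultiplyPretransitive
      ↥(A.map (stabilizer G a).subtype ⊔ B.map (stabilizer G b).subtype) X 2 := by
  set K := A.map (stabilizer G a).subtype ⊔ B.map (stabilizer G b).subtype
  have hA {x y : X} (hx : x ≠ a) (hy : y ≠ a) : ∃ g : K, g • a = a ∧ g • x = y := by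
    obtain ⟨g, hg⟩ := exists_smul_eq A (⟨x, hx⟩ : SubMulAction.ofStabilizer G a) ⟨y, hy⟩
    exact ⟨⟨_, Subgroup.mem_sup_left ⟨g, g.2, rfl⟩⟩, g.1.2, congrArg Subtype.val hg⟩
  have hB {x y : X} (hx : x ≠ b) (hy : y ≠ b) : ∃ g : K, g • x = y := by
    obtain ⟨g, hg⟩ := exists_smul_eq B (⟨x, hx⟩ : SubMulAction.ofStabilizer G b) ⟨y, hy⟩
    exact ⟨⟨_, Subgroup.mem_sup_right ⟨g, g.2, rfl⟩⟩, congrArg Subtype.val hg⟩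
  obtain ⟨c, hca, hcb⟩ := hX
  have : IsPretransitive K X := by
    refine (isPretransitive_iff_base c).2 fun x ↦ ?_
    obtain rfl | hxa := eq_or_ne x a
    · exact hB hcb hab
    · obtain ⟨g, -, hg⟩ := hA hca hxa
      exact ⟨g, hg⟩
  rw [SubMulAction.ofStabilizer.isMultiplyPretransitive (a := a), is_one_pretransitive_iff]
  refine ⟨fun x y ↦ ?_⟩
  obtain ⟨g, hga, hg⟩ := hA x.2 y.2
  exact ⟨⟨g, hga⟩, Subtype.ext hg⟩

end Transitivity

section NormalSubgroup

variable {p : ℕ}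

theorem dvd_card_of_normal_isPGroup {G X : Type*} [Group G] [MulAction G X]
    [IsQuasiPreprimitive G X] [FaithfulSMul G X] [Finite X] [Fact p.Prime]
    {N : Subgroup G} [N.Normal] [Nontrivial N] (hN : IsPGroup p N) : p ∣ Nat.card X := by
  have hfixed : fixedPoints N X ≠ Set.univ := by
    obtain ⟨g, hg⟩ := exists_ne (1 : N)
    contrapose! hg
    refine eq_of_smul_eq_smul fun x : X ↦ ?_
    rw [one_smul]
    exact (hg ▸ Set.mem_univ x : x ∈ fixedPoints N X) g
  have : IsPretransitive N X := IsQuasiPreprimitive.isPretransitive_of_normal hfixed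
  obtain ⟨x, hx⟩ := (Set.ne_univ_iff_exists_notMem _).1 hfixed
  obtain ⟨k, hk⟩ := hN.card_orbit x
  rw [orbit_eq_univ, Nat.card_coe_set_eq, Set.ncard_univ] at hk
  rw [hk]
  refine dvd_pow_self p ?_
  rintro rfl
  rw [pow_zero, Nat.card_eq_one_iff_unique] at hk
  have := hk.1
  exact hx fun g ↦ Subsingleton.elim _ _

theorem card_le_four_of_normal_isSolvable {α : Type*} [Finite α] {N : Subgroup (Equiv.Perm α)}
    [N.Normal] [Nontrivial N] [Group.IsSolvable N] : Nat.card α ≤ 4 := by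
  classical
  have := Fintype.ofFinite α
  by_contra! hα
  have halt : Equiv.Perm.sign.ker ≤ N.subtype.range :=
    N.range_subtype.symm ▸ Equiv.Perm.alternatingGroup_le_of_normal hα inferInstance
  have hα' : 5 ≤ Cardinal.mk α := by
    rw [← Nat.cast_card]
    exact_mod_cast hα
  exact Equiv.Perm.not_isSolvable α hα' (Group.isSolvable_of_ker_le_range _ _ halt)

/-- The pointwise fixator of `s` in the symmetric group is the symmetric group of the complement,
through its action there. -/
noncomputable def fixingSubgroupPermEquiv {α : Type*} (s : Set α) :
    fixingSubgroup (Equiv.Perm α) s ≃* Equiv.Perm ↥sᶜ :=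
  MulEquiv.ofBijective
    (MulAction.toPermHom _ (SubMulAction.ofFixingSubgroup (Equiv.Perm α) s)) <| by
  classical
  refine ⟨fun g h hgh ↦ Subtype.ext (Equiv.ext fun x ↦ ?_), fun σ ↦ ?_⟩
  · by_cases hx : x ∈ s
    · exact (g.2 ⟨x, hx⟩).trans (h.2 ⟨x, hx⟩).symm
    · exact congrArg Subtype.val (Equiv.congr_fun hgh ⟨x, hx⟩)
  · refine ⟨⟨Equiv.Perm.ofSubtype σ, fun x ↦ ?_⟩, Equiv.ext fun x ↦ Subtype.ext ?_⟩
    · exact Equiv.Perm.ofSubtype_apply_of_not_mem σ (not_not.2 x.2)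
    · exact Equiv.Perm.ofSubtype_apply_coe σ x

theorem dvd_ncard_compl_and_ncard_compl_le_four {α : Type*} [Finite α] [Fact p.Prime] {s : Set α}
    {P : Subgroup (fixingSubgroup (Equiv.Perm α) s)} [P.Normal] (hP : P ≠ ⊥) (hpP : IsPGroup p P) :
    p ∣ sᶜ.ncard ∧ sᶜ.ncard ≤ 4 := by
  let e := fixingSubgroupPermEquiv s
  let N := P.map e.toMonoidHom
  have : N.Normal := Subgroup.Normal.map inferInstance _ e.surjective
  have hN : IsPGroup p N := hpP.map _
  have : Nontrivial N :=
    N.nontrivial_iff_ne_bot.2 ((P.map_eq_bot_iff_of_injective e.injective).not.2 hP)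
  have := hN.isNilpotent
  exact ⟨dvd_card_of_normal_isPGroup hN, card_le_four_of_normal_isSolvable (N := N)⟩

end NormalSubgroup

section OrderedPairs

variable {n : ℕ}

theorem stabilizer_opair_eq_fixingSubgroup (ω : OPairs n) :
    stabilizer (Equiv.Perm (Fin n)) ω =
      fixingSubgroup (Equiv.Perm (Fin n)) {ω.1.1, ω.1.2} := by
  ext g
  rw [mem_stabilizer_iff, mem_fixingSubgroup_iff, Subtype.ext_iff, Prod.ext_iff]
  simp only [Set.mem_insert_iff, Set.mem_singleton_iff, forall_eq_or_imp, forall_eq]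
  rfl

theorem exists_mem_smul_opair_eq {K : Subgroup (Equiv.Perm (Fin n))}
    [IsMultiplyPretransitive K (Fin n) 2] (u w : OPairs n) : ∃ g ∈ K, g • u = w := by
  obtain ⟨g, h₁, h₂⟩ := is_two_pretransitive_iff.1 ‹_› u.2 w.2
  exact ⟨g, g.2, Subtype.ext (Prod.ext h₁ h₂)⟩

end OrderedPairs

/-- if the stabiliser `L_ω` of `ω = (a,b)` in `Sym(n)` acting on ordered
pairs of distinct elements has a nontrivial normal `p`-subgroup, then `n ∈ {4,5,6}`,
`L_ω` contains a Sylow `p`-subgroup of both point stabilisers `T₁ = Sym(n)_a`,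
`T₂ = Sym(n)_b`, and `⟨O^p(T₁), O^p(T₂)⟩` is transitive on the ordered pairs. -/
theorem stmt_5 (n : ℕ) (hn : 4 ≤ n) (p : ℕ) (hp : p.Prime) (a b : Fin n) (hab : a ≠ b)
    (hP : ∃ P : Subgroup ↥(MulAction.stabilizer (Equiv.Perm (Fin n)) (⟨(a, b), hab⟩ : OPairs n)),
      P ≠ ⊥ ∧ P.Normal ∧ IsPGroup p P) :
    n ∈ ({4, 5, 6} : Set ℕ) ∧
    (∃ S : Sylow p ↥(MulAction.stabilizer (Equiv.Perm (Fin n)) a),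
      (S : Subgroup ↥(MulAction.stabilizer (Equiv.Perm (Fin n)) a)).map
          (MulAction.stabilizer (Equiv.Perm (Fin n)) a).subtype ≤
        MulAction.stabilizer (Equiv.Perm (Fin n)) (⟨(a, b), hab⟩ : OPairs n)) ∧
    (∃ S : Sylow p ↥(MulAction.stabilizer (Equiv.Perm (Fin n)) b),
      (S : Subgroup ↥(MulAction.stabilizer (Equiv.Perm (Fin n)) b)).map
          (MulAction.stabilizer (Equiv.Perm (Fin n)) b).subtype ≤
        MulAction.stabilizer (Equiv.Perm (Fin n)) (⟨(a, b), hab⟩ : OPairs n)) ∧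
    (∀ u w : OPairs n,
      ∃ g ∈ (pResidual p ↥(MulAction.stabilizer (Equiv.Perm (Fin n)) a)).map
            (MulAction.stabilizer (Equiv.Perm (Fin n)) a).subtype ⊔
          (pResidual p ↥(MulAction.stabilizer (Equiv.Perm (Fin n)) b)).map
            (MulAction.stabilizer (Equiv.Perm (Fin n)) b).subtype,
        g • u = w) := by
  have := Fact.mk hp
  have hcard : Nat.card (Fin n) = n := Nat.card_fin n
  rw [stabilizer_opair_eq_fixingSubgroup] at hP ⊢
  obtain ⟨P, hP, hPn, hpP⟩ := hP
  obtain ⟨hdvd, hle⟩ := dvd_ncard_compl_and_ncard_compl_le_four hP hpP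
  rw [Set.ncard_compl, Set.ncard_pair hab, hcard] at hdvd hle
  have hpn : ¬ p ∣ n - 1 := by
    rw [show n - 1 = n - 2 + 1 by omega, Nat.dvd_add_right hdvd]
    exact hp.not_dvd_one
  have := Equiv.Perm.isMultiplyPretransitive (Fin n) 2
  have := isPretransitive_ofStabilizer (G := Equiv.Perm (Fin n)) (X := Fin n)
  have (c : Fin n) : IsPretransitive (pResidual p (stabilizer (Equiv.Perm (Fin n)) c))
      (SubMulAction.ofStabilizer (Equiv.Perm (Fin n)) c) :=
    isPretransitive_pResidual <| by rwa [SubMulAction.nat_card_ofStabilizer_eq, hcard]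
  refine ⟨?_, ?_, ?_, ?_⟩
  · simp only [Set.mem_insert_iff, Set.mem_singleton_iff]
    omega
  · exact exists_sylow_stabilizer_le_fixingSubgroup_pair hab (by rwa [hcard])
  · rw [Set.pair_comm]
    exact exists_sylow_stabilizer_le_fixingSubgroup_pair hab.symm (by rwa [hcard])
  · have := isMultiplyPretransitive_two_map_subtype_sup
      (A := pResidual p (stabilizer (Equiv.Perm (Fin n)) a))
      (B := pResidual p (stabilizer (Equiv.Perm (Fin n)) b)) hab
      (Fin.exists_ne_and_ne_of_two_lt a b (by omega))
    exact exists_mem_smul_opair_eq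
end
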